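/- arXiv:1909.07878 — 4 statements merged into one kernel-verified Lean document; each statement's English description precedes it below -/
import Mathlib

section
/- For a finite simple graph G, the following are equivalent: (1) G has a fractional perfect matching; (2) there is a partition V₁, V₂, …, V_m of the vertex set V(G) such that, for each i, the induced subgraph G[V_i] is either a complete graph on two vertices K₂ or a Hamiltonian graph; (3) there is a partition V₁, V₂, …, V_m of V(G) such that, for each i, the induced subgraph G[V_i] is either K₂ or a Hamiltonian graph on an odd number of vertices. -/
open Finset

variable {V : Type*}

/-- A fractional perfect matching of a finite simple graph. -/
def SimpleGraph.IsFracPerfectMatching [Fintype V] [DecidableEq V]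
    (G : SimpleGraph V) (f : Sym2 V → ℝ) : Prop :=
  (∀ e, 0 ≤ f e ∧ f e ≤ 1) ∧ (∀ e, e ∉ G.edgeSet → f e = 0) ∧
    ∀ v : V, ∑ e ∈ Finset.univ.filter (fun e : Sym2 V => v ∈ e), f e = 1

/-- `G` has a fractional perfect matching. -/
def SimpleGraph.HasFPM [Fintype V] [DecidableEq V] (G : SimpleGraph V) : Prop :=
  ∃ f, G.IsFracPerfectMatching f

/-- The fractional matching preclusion number of `G`. -/
noncomputable def SimpleGraph.fmp [Fintype V] [DecidableEq V] (G : SimpleGraph V) : ℕ :=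
  sInf {k | ∃ F : Finset (Sym2 V), ↑F ⊆ G.edgeSet ∧ F.card = k ∧
    ¬ (G.deleteEdges ↑F).HasFPM}

/-- The minimum degree of `G`. -/
noncomputable def SimpleGraph.minDeg [Fintype V] (G : SimpleGraph V) : ℕ :=
  sInf {d | ∃ v : V, (G.neighborSet v).ncard = d}

/-- A graph contains a Hamiltonian cycle. -/
def SimpleGraph.IsHamil {W : Type*} [DecidableEq W] (G : SimpleGraph W) : Prop :=
  ∃ (a : W) (p : G.Walk a a), p.IsHamiltonianCycle

/-- The induced subgraph on `A` is a `K₂`. -/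
def SimpleGraph.IsK2Part [DecidableEq V] (G : SimpleGraph V) (A : Finset V) : Prop :=
  ∃ u v : V, A = {u, v} ∧ G.Adj u v

/-- A good part: `K₂` or odd Hamiltonian. -/
def GoodPart [DecidableEq V] (G : SimpleGraph V) (A : Finset V) : Prop :=
  G.IsK2Part A ∨ (Odd A.card ∧ (G.induce (A : Set V)).IsHamil)

/-- `S` can be partitioned into good parts. -/
def GoodSet [DecidableEq V] (G : SimpleGraph V) (S : Finset V) : Prop :=
  ∃ P : Finpartition S, ∀ A ∈ P.parts, GoodPart G A

theorem GoodSet.extend [DecidableEq V] {G : SimpleGraph V} {S A : Finset V}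
    (hS : GoodSet G S) (hA : GoodPart G A) (hne : A.Nonempty) (hd : Disjoint S A) :
    GoodSet G (S ∪ A) := by
  obtain ⟨P, hP⟩ := hS
  refine ⟨P.extend (b := A) (c := S ∪ A) hne.ne_empty hd rfl, ?_⟩
  intro B hB
  simp only [Finpartition.extend, Finset.mem_insert] at hB
  rcases hB with rfl | hB
  · exact hA
  · exact hP B hB

theorem sum_fpm [Fintype V] [DecidableEq V] (f : Sym2 V → ℝ) (v : V) :
    ∑ e ∈ Finset.univ.filter (fun e : Sym2 V => v ∈ e), f e = ∑ u : V, f s(v, u) := by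
  symm
  apply Finset.sum_bij (fun u _ => s(v, u))
  · intro a _; simp
  · intro a _ b _ h
    exact Sym2.congr_right.mp h
  · intro e he
    simp only [Finset.mem_filter, Finset.mem_univ, true_and] at he
    obtain ⟨u, rfl⟩ := he
    exact ⟨u, Finset.mem_univ _, rfl⟩
  · intros; rfl

theorem HasFPM.exists_inj [Fintype V] [DecidableEq V] {G : SimpleGraph V} (h : G.HasFPM) :
    ∃ s : V → V, Function.Injective s ∧ ∀ v, G.Adj v (s v) := by
  classical
  rw [← Fintype.all_card_le_filter_rel_iff_exists_injective]
  obtain ⟨f, h1, h2, h3⟩ := h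
  simp only [sum_fpm] at h3
  intro A
  have key : (A.card : ℝ) ≤ ((Finset.univ.filter (fun b => ∃ a ∈ A, G.Adj a b)).card : ℝ) := by
    set N := Finset.univ.filter (fun b => ∃ a ∈ A, G.Adj a b) with hN
    calc (A.card : ℝ) = ∑ v ∈ A, ∑ u : V, f s(v, u) := by simp [h3]
      _ = ∑ v ∈ A, ∑ u ∈ N, f s(v, u) := by
        refine Finset.sum_congr rfl fun v hv => ?_
        symm
        apply Finset.sum_subset (Finset.subset_univ _)
        intro u _ hu
        apply h2
        intro hadj
        exact hu (by simpa [hN] using ⟨v, hv, hadj⟩)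
      _ = ∑ u ∈ N, ∑ v ∈ A, f s(v, u) := Finset.sum_comm
      _ ≤ ∑ u ∈ N, ∑ v : V, f s(u, v) := by
        refine Finset.sum_le_sum fun u _ => ?_
        simp only [Sym2.eq_swap (a := u)]
        exact Finset.sum_le_sum_of_subset_of_nonneg (Finset.subset_univ _) (fun v _ _ => (h1 _).1)
      _ = N.card := by simp [h3]
  exact_mod_cast key

theorem hasFPM_of_inj [Fintype V] [DecidableEq V] {G : SimpleGraph V} (s : V → V)
    (hs : Function.Injective s) (ha : ∀ v, G.Adj v (s v)) : G.HasFPM := by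
  refine ⟨fun e => ((Finset.univ.filter (fun v => s(v, s v) = e)).card : ℝ) / 2, ?_, ?_, ?_⟩
  · intro e
    refine ⟨by positivity, ?_⟩
    have : (Finset.univ.filter (fun v => s(v, s v) = e)).card ≤ 2 := by
      induction e with
      | h a b =>
        refine (Finset.card_le_card (t := {a, b}) ?_).trans Finset.card_le_two
        intro v hv
        simp only [Finset.mem_filter, Finset.mem_univ, true_and, Sym2.eq_iff] at hv
        simp only [Finset.mem_insert, Finset.mem_singleton]
        tauto
    have : ((Finset.univ.filter (fun v => s(v, s v) = e)).card : ℝ) ≤ 2 := by exact_mod_cast this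
    linarith
  · intro e he
    have : Finset.univ.filter (fun v => s(v, s v) = e) = ∅ := by
      ext v
      simp only [Finset.mem_filter, Finset.mem_univ, true_and, Finset.notMem_empty, iff_false]
      rintro rfl
      exact he (ha v)
    simp [this]
  · intro v
    rw [← Finset.sum_div, ← Nat.cast_sum]
    have h1 : ∑ e ∈ Finset.univ.filter (fun e : Sym2 V => v ∈ e),
        (Finset.univ.filter (fun w => s(w, s w) = e)).card
        = (Finset.univ.filter (fun w => v ∈ s(w, s w))).card := by
      rw [Finset.card_eq_sum_card_fiberwise (f := fun w => s(w, s w))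
        (t := Finset.univ.filter (fun e : Sym2 V => v ∈ e))]
      · refine Finset.sum_congr rfl fun e he => ?_
        congr 1
        ext w
        simp only [Finset.mem_filter, Finset.mem_univ, true_and] at he ⊢
        constructor
        · rintro rfl; exact ⟨he, rfl⟩
        · exact fun h => h.2
      · intro w hw
        simpa using hw
    obtain ⟨u, hu⟩ := (Finite.injective_iff_surjective.mp hs) v
    have h2 : Finset.univ.filter (fun w => v ∈ s(w, s w)) = {v, u} := by
      ext w
      simp only [Finset.mem_filter, Finset.mem_univ, true_and, Sym2.mem_iff, Finset.mem_insert,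
        Finset.mem_singleton]
      constructor
      · rintro (h | h)
        · exact Or.inl h.symm
        · exact Or.inr (hs (h.symm.trans hu.symm))
      · rintro (rfl | rfl)
        · exact Or.inl rfl
        · exact Or.inr hu.symm
    have h3 : v ≠ u := by
      rintro rfl
      have := ha v
      rw [hu] at this
      exact G.loopless.irrefl _ this
    rw [h1, h2, Finset.card_pair h3]
    norm_num

/-- A Hamiltonian graph has an injective neighbour map. -/
theorem IsHamil.exists_inj {W : Type*} [DecidableEq W] {G : SimpleGraph W} (h : G.IsHamil) :
    ∃ s : W → W, Function.Injective s ∧ ∀ v, G.Adj v (s v) := by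
  obtain ⟨a, p, hp⟩ := h
  have hex : ∀ v, ∃ d ∈ p.darts, d.fst = v := by
    intro v
    have h1 : v ∈ p.support.tail := by
      have := (SimpleGraph.Walk.isHamiltonianCycle_iff_isCycle_and_support_count_tail_eq_one.mp hp).2 v
      exact List.count_pos_iff.mp (by omega)
    have h2 : v ∈ p.support.dropLast := p.tail_support_perm_dropLast_support.mem_iff.mp h1
    rw [← SimpleGraph.Walk.map_fst_darts] at h2
    simpa using h2
  choose d hd hd' using hex
  refine ⟨fun v => (d v).snd, ?_, ?_⟩
  · intro v w hvw
    have hn : (p.darts.map (·.snd)).Nodup := by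
      rw [SimpleGraph.Walk.map_snd_darts]
      exact hp.isCycle.support_nodup
    have := List.inj_on_of_nodup_map hn (hd v) (hd w) hvw
    rw [← hd' v, ← hd' w, this]
  · intro v
    have := (d v).adj
    rwa [hd' v] at this

theorem part_exists_inj [DecidableEq V] {G : SimpleGraph V} {A : Finset V}
    (h : G.IsK2Part A ∨ (G.induce (A : Set V)).IsHamil) :
    ∃ s : V → V, (∀ v ∈ A, s v ∈ A ∧ G.Adj v (s v)) ∧ Set.InjOn s A := by
  rcases h with ⟨u, v, rfl, huv⟩ | h
  · refine ⟨Equiv.swap u v, ?_, (Equiv.swap u v).injective.injOn⟩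
    intro w hw
    simp only [Finset.mem_insert, Finset.mem_singleton] at hw
    rcases hw with rfl | rfl
    · simp [huv]
    · simp [huv.symm]
  · obtain ⟨s, hs, ha⟩ := IsHamil.exists_inj h
    refine ⟨fun v => if hv : v ∈ A then (s ⟨v, hv⟩ : V) else v, ?_, ?_⟩
    · intro v hv
      simp only [hv, dif_pos]
      exact ⟨(s ⟨v, hv⟩).2, ha ⟨v, hv⟩⟩
    · intro v hv w hw hvw
      have hv' : v ∈ A := hv
      have hw' : w ∈ A := hw
      simp only [hv', hw', dif_pos] at hvw
      exact congrArg Subtype.val (hs (Subtype.ext hvw))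

theorem hasFPM_of_partition [Fintype V] [DecidableEq V] {G : SimpleGraph V}
    (P : Finpartition (Finset.univ : Finset V))
    (hP : ∀ A ∈ P.parts, G.IsK2Part A ∨ (G.induce (A : Set V)).IsHamil) : G.HasFPM := by
  have hex : ∀ A : Finset V, ∃ s : V → V, A ∈ P.parts →
      ((∀ v ∈ A, s v ∈ A ∧ G.Adj v (s v)) ∧ Set.InjOn s A) := by
    intro A
    by_cases hA : A ∈ P.parts
    · obtain ⟨s, hs⟩ := part_exists_inj (hP A hA)
      exact ⟨s, fun _ => hs⟩
    · exact ⟨id, fun h => absurd h hA⟩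
  choose t ht using hex
  have hpart : ∀ v, P.part v ∈ P.parts := fun v => P.part_mem.mpr (Finset.mem_univ v)
  have hmem : ∀ v, v ∈ P.part v := fun v => P.mem_part (Finset.mem_univ v)
  refine hasFPM_of_inj (fun v => t (P.part v) v) ?_ ?_
  · intro v w hvw
    dsimp only at hvw
    have h1 := ((ht _ (hpart v)).1 v (hmem v)).1
    have h2 := ((ht _ (hpart w)).1 w (hmem w)).1
    rw [hvw] at h1
    have h3 : P.part v = P.part w := P.eq_of_mem_parts (hpart v) (hpart w) h1 h2
    rw [h3] at hvw
    exact (ht _ (hpart w)).2 (by simpa [h3] using hmem v) (hmem w) hvw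
  · intro v
    exact ((ht _ (hpart v)).1 v (hmem v)).2

open Function in
theorem goodSet_even [DecidableEq V] {G : SimpleGraph V} (s : V → V)
    (ha : ∀ v, G.Adj v (s v)) (S : Finset V) (hS : GoodSet G S) (v : V) (k : ℕ)
    (hk : 2 * k ≤ minimalPeriod s v)
    (hd : Disjoint S ((Finset.range (2 * k)).image (fun i => s^[i] v))) :
    GoodSet G (S ∪ (Finset.range (2 * k)).image (fun i => s^[i] v)) := by
  induction k with
  | zero => simpa using hS
  | succ k ih =>
    have e : (Finset.range (2 * (k + 1))).image (fun i => s^[i] v)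
        = (Finset.range (2 * k)).image (fun i => s^[i] v) ∪ {s^[2 * k] v, s^[2 * k + 1] v} := by
      rw [show 2 * (k + 1) = 2 * k + 1 + 1 by ring, Finset.range_add_one, Finset.range_add_one]
      ext x
      simp only [Finset.image_insert, Finset.mem_insert, Finset.mem_union, Finset.mem_singleton]
      tauto
    rw [e] at hd ⊢
    rw [Finset.disjoint_union_right] at hd
    rw [← Finset.union_assoc]
    refine (ih (by omega) hd.1).extend (Or.inl ⟨_, _, rfl, ?_⟩) (by simp) ?_
    · rw [iterate_succ_apply']
      exact ha _
    · rw [Finset.disjoint_union_left]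
      refine ⟨hd.2, ?_⟩
      rw [Finset.disjoint_left]
      intro x hx hx'
      simp only [Finset.mem_image, Finset.mem_range] at hx
      obtain ⟨i, hi, rfl⟩ := hx
      simp only [Finset.mem_insert, Finset.mem_singleton] at hx'
      rcases hx' with h | h
      · rw [iterate_eq_iterate_iff_of_lt_minimalPeriod (by omega) (by omega)] at h
        omega
      · rw [iterate_eq_iterate_iff_of_lt_minimalPeriod (by omega) (by omega)] at h
        omega

open Function in
theorem hamil_orbit [DecidableEq V] {G : SimpleGraph V} (s : V → V)
    (ha : ∀ v, G.Adj v (s v)) (v : V) (hn : 2 < minimalPeriod s v) (A : Finset V)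
    (hA : A = (Finset.range (minimalPeriod s v)).image (fun i => s^[i] v)) :
    A.card = minimalPeriod s v ∧ (G.induce (A : Set V)).IsHamil := by
  have hcard : A.card = minimalPeriod s v := by
    rw [hA, Finset.card_image_of_injOn, Finset.card_range]
    intro i hi j hj hij
    exact iterate_injOn_Iio_minimalPeriod (by simpa using hi) (by simpa using hj) hij
  refine ⟨hcard, ?_⟩
  have hmem : ∀ i, i < minimalPeriod s v → s^[i] v ∈ A := by
    intro i hi
    rw [hA]
    exact Finset.mem_image_of_mem _ (Finset.mem_range.mpr hi)
  have hstep : ∀ x y : Fin (minimalPeriod s v), (y - x).val = 1 →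
      G.Adj (s^[x.val] v) (s^[y.val] v) := by
    intro x y hxy
    have h1 : s^[y.val] v = s^[x.val + 1] v := by
      rw [← iterate_mod_minimalPeriod_eq (n := x.val + 1)]
      congr 1
      have hx := x.2
      have hy := y.2
      rw [Fin.sub_def] at hxy
      simp only at hxy
      rcases Nat.lt_or_ge (minimalPeriod s v - x.val + y.val) (minimalPeriod s v) with h | h
      · rw [Nat.mod_eq_of_lt h] at hxy
        have h0 : y.val = 0 := by omega
        have h1 : x.val + 1 = minimalPeriod s v := by omega
        rw [h1, h0, Nat.mod_self]
      · rw [Nat.mod_eq_sub_mod h, Nat.mod_eq_of_lt (by omega)] at hxy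
        rw [Nat.mod_eq_of_lt (by omega)]
        omega
    rw [h1, iterate_succ_apply']
    exact ha _
  have hc : (SimpleGraph.cycleGraph (minimalPeriod s v)).IsContained (G.induce (A : Set V)) := by
    refine ⟨⟨⟨fun i => ⟨s^[i.val] v, hmem _ i.2⟩, ?_⟩, ?_⟩⟩
    · intro x y hxy
      rw [SimpleGraph.cycleGraph_adj'] at hxy
      change G.Adj (s^[x.val] v) (s^[y.val] v)
      rcases hxy with h | h
      · exact (hstep _ _ h).symm
      · exact hstep _ _ h
    · intro x y hxy
      have hxy' : s^[x.val] v = s^[y.val] v := congrArg Subtype.val hxy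
      exact Fin.ext (iterate_injOn_Iio_minimalPeriod x.2 y.2 hxy')
  obtain ⟨a, p, hp, hl⟩ := (SimpleGraph.cycleGraph_isContained_iff hn).mp hc
  refine ⟨a, p, ?_⟩
  rw [SimpleGraph.Walk.isHamiltonianCycle_iff_isCycle_and_length_eq]
  refine ⟨hp, ?_⟩
  rw [hl, ← hcard]
  simp

open Function in
theorem goodSet_of_inj [Finite V] [DecidableEq V] {G : SimpleGraph V} (s : V → V)
    (hs : Function.Injective s) (ha : ∀ v, G.Adj v (s v)) (S : Finset V)
    (hS : ∀ v ∈ S, s v ∈ S) : GoodSet G S := by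
  induction S using Finset.strongInduction with
  | H S ih =>
  rcases S.eq_empty_or_nonempty with rfl | ⟨v, hv⟩
  · exact ⟨Finpartition.empty _, by simp [Finpartition.empty]⟩
  have hpos : 0 < minimalPeriod s v :=
    minimalPeriod_pos_of_mem_periodicPts (hs.mem_periodicPts v)
  have hne1 : minimalPeriod s v ≠ 1 := by
    intro h
    rw [minimalPeriod_eq_one_iff_isFixedPt] at h
    have := ha v
    rw [h] at this
    exact G.loopless.irrefl _ this
  set O := (Finset.range (minimalPeriod s v)).image (fun i => s^[i] v) with hO
  have hvO : v ∈ O := Finset.mem_image.mpr ⟨0, Finset.mem_range.mpr hpos, rfl⟩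
  have hOS : O ⊆ S := by
    intro x hx
    obtain ⟨i, _, rfl⟩ := Finset.mem_image.mp hx
    have : ∀ i, s^[i] v ∈ S := by
      intro i
      induction i with
      | zero => exact hv
      | succ i ih => rw [iterate_succ_apply']; exact hS _ ih
    exact this i
  have hgood : GoodSet G (S \ O) := by
    apply ih
    · exact Finset.sdiff_ssubset hOS ⟨v, hvO⟩
    · intro x hx
      rw [Finset.mem_sdiff] at hx ⊢
      refine ⟨hS x hx.1, fun h => hx.2 ?_⟩
      obtain ⟨i, hi, hix⟩ := Finset.mem_image.mp h
      rw [Finset.mem_range] at hi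
      rcases i with _ | i
      · refine Finset.mem_image.mpr ⟨minimalPeriod s v - 1, Finset.mem_range.mpr (by omega), ?_⟩
        apply hs
        rw [← iterate_succ_apply' s, show (minimalPeriod s v - 1).succ = minimalPeriod s v by omega,
          iterate_minimalPeriod, ← hix]
        rfl
      · refine Finset.mem_image.mpr ⟨i, Finset.mem_range.mpr (by omega), ?_⟩
        apply hs
        rw [← iterate_succ_apply' s, hix]
  have hdis : Disjoint (S \ O) O := Finset.sdiff_disjoint
  rw [← Finset.sdiff_union_of_subset hOS]
  rcases Nat.even_or_odd (minimalPeriod s v) with he | ho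
  · obtain ⟨k, hk⟩ := he
    have hk2 : minimalPeriod s v = 2 * k := by omega
    have := goodSet_even s ha (S \ O) hgood v k (by omega) (by rw [← hk2]; exact hdis)
    rwa [← hk2] at this
  · have h3 : 2 < minimalPeriod s v := by
      obtain ⟨k, hk⟩ := ho
      omega
    obtain ⟨hc, hh⟩ := hamil_orbit s ha v h3 O hO
    exact hgood.extend (Or.inr ⟨by rw [hc]; exact ho, hh⟩) ⟨v, hvO⟩ hdis

theorem hasFPM_iff_partition [Fintype V] [DecidableEq V] (G : SimpleGraph V) :
    (G.HasFPM ↔ ∃ P : Finpartition (Finset.univ : Finset V),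
        ∀ A ∈ P.parts, G.IsK2Part A ∨ (G.induce (A : Set V)).IsHamil) ∧
    (G.HasFPM ↔ ∃ P : Finpartition (Finset.univ : Finset V),
        ∀ A ∈ P.parts, G.IsK2Part A ∨ (Odd A.card ∧ (G.induce (A : Set V)).IsHamil)) := by
  have h13 : G.HasFPM → ∃ P : Finpartition (Finset.univ : Finset V),
      ∀ A ∈ P.parts, G.IsK2Part A ∨ (Odd A.card ∧ (G.induce (A : Set V)).IsHamil) := by
    intro h
    obtain ⟨s, hs, ha⟩ := HasFPM.exists_inj h
    exact goodSet_of_inj s hs ha Finset.univ (fun v _ => Finset.mem_univ _)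
  refine ⟨⟨fun h => ?_, fun ⟨P, hP⟩ => hasFPM_of_partition P hP⟩,
    ⟨h13, fun ⟨P, hP⟩ => hasFPM_of_partition P fun A hA => (hP A hA).imp_right And.right⟩⟩
  obtain ⟨P, hP⟩ := h13 h
  exact ⟨P, fun A hA => (hP A hA).imp_right And.right⟩
end

section
/- Let n and k be positive integers with 6 ≤ k ≤ n − 1, and write n = ℓ·(k+1) + r with 0 ≤ r ≤ k. If (a) r = 0, or (b) r ≥ 1 and k + r is odd, or (c) r ≥ 1, k + r is even, k is even, and ℓ ≥ 2, then s(n,k) = nk/2; that is, the minimum number of edges of a graph of order n with fractional matching preclusion number k equals nk/2. -/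
open Finset

variable {V : Type*}

noncomputable section

open Classical in
/-- 0/1 adjacency indicator. -/
def adjInd {V : Type*} (G : SimpleGraph V) (u v : V) : ℕ := if G.Adj u v then 1 else 0

theorem adjInd_eq {V : Type*} (G : SimpleGraph V) (u v : V) (p : Prop) [Decidable p]
    (h : G.Adj u v ↔ p) : adjInd G u v = if p then 1 else 0 := by
  unfold adjInd
  by_cases hp : p
  · rw [if_pos hp, if_pos (h.mpr hp)]
  · rw [if_neg hp, if_neg (fun hh => hp (h.mp hh))]

theorem adjInd_congr {V W : Type*} (G : SimpleGraph V) (H : SimpleGraph W) (u v : V) (a b : W)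
    (h : G.Adj u v ↔ H.Adj a b) : adjInd G u v = adjInd H a b := by
  classical
  exact adjInd_eq G u v _ h

/-- Weight of arcs: inside class 0, or between classes 0 and 2. -/
def wgt (i j : Fin 3) : ℕ :=
  if (i = 0 ∧ j = 0) ∨ (i = 0 ∧ j = 2) ∨ (i = 2 ∧ j = 0) then 1 else 0

/-- Robust k-regular graph. -/
def GoodG (k : ℕ) {V : Type*} [Fintype V] (G : SimpleGraph V) : Prop :=
  (∀ v, ∑ w, adjInd G v w = k) ∧
  ∀ c : V → Fin 3, (∑ v, if c v = 1 then 1 else 0) < (∑ v, if c v = 0 then 1 else 0) →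
    2 * k ≤ ∑ u, ∑ v, adjInd G u v * wgt (c u) (c v)

def GoodT (k : ℕ) (V : Type*) [Fintype V] : Prop := ∃ G : SimpleGraph V, GoodG k G

theorem GoodT.equiv {k : ℕ} {V W : Type*} [Fintype V] [Fintype W] (e : V ≃ W)
    (h : GoodT k V) : GoodT k W := by
  obtain ⟨G, h1, h2⟩ := h
  refine ⟨G.comap e.symm, ?_, ?_⟩
  · intro v
    rw [← h1 (e.symm v), ← Equiv.sum_comp e.symm]
    rfl
  · intro c hc
    have := h2 (c ∘ e) (by
      simp only [Function.comp]
      rw [Equiv.sum_comp e (fun v => if c v = 1 then 1 else 0),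
        Equiv.sum_comp e (fun v => if c v = 0 then 1 else 0)]
      exact hc)
    refine this.trans (le_of_eq ?_)
    rw [← Equiv.sum_comp e (fun u => ∑ v, adjInd (G.comap e.symm) u v * wgt (c u) (c v))]
    refine Finset.sum_congr rfl fun u _ => ?_
    rw [← Equiv.sum_comp e (fun v => adjInd (G.comap e.symm) (e u) v * wgt (c (e u)) (c v))]
    refine Finset.sum_congr rfl fun v _ => ?_
    rw [adjInd_congr G (G.comap e.symm) u v (e u) (e v) (by simp)]
    rfl

theorem GoodT.sum {k : ℕ} {V W : Type*} [Fintype V] [Fintype W]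
    (hV : GoodT k V) (hW : GoodT k W) : GoodT k (V ⊕ W) := by
  obtain ⟨G, h1, h2⟩ := hV
  obtain ⟨H, h3, h4⟩ := hW
  have e1 : ∀ u v, adjInd (G ⊕g H) (Sum.inl u) (Sum.inl v) = adjInd G u v := by
    intro u v; exact adjInd_congr _ _ _ _ _ _ (by simp)
  have e2 : ∀ u v, adjInd (G ⊕g H) (Sum.inr u) (Sum.inr v) = adjInd H u v := by
    intro u v; exact adjInd_congr _ _ _ _ _ _ (by simp)
  have e3 : ∀ u v, adjInd (G ⊕g H) (Sum.inl u) (Sum.inr v) = 0 := by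
    intro u v; simp [adjInd]
  have e4 : ∀ u v, adjInd (G ⊕g H) (Sum.inr u) (Sum.inl v) = 0 := by
    intro u v; simp [adjInd]
  refine ⟨G ⊕g H, ?_, ?_⟩
  · rintro (v | v)
    · simp [Fintype.sum_sum_type, e1, e3, h1]
    · simp [Fintype.sum_sum_type, e2, e4, h3]
  · intro c hc
    simp only [Fintype.sum_sum_type, e1, e2, e3, e4, zero_mul, Finset.sum_const_zero,
      add_zero, zero_add] at hc ⊢
    have a := h2 (c ∘ Sum.inl)
    have b := h4 (c ∘ Sum.inr)
    simp only [Function.comp] at a b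
    by_cases hh : (∑ v, if c (Sum.inl v) = 1 then 1 else 0) < (∑ v, if c (Sum.inl v) = 0 then 1 else 0)
    · exact (a hh).trans (Nat.le_add_right _ _)
    · exact (b (by omega)).trans (Nat.le_add_left _ _)

theorem GoodT.add {k m n : ℕ} (hV : GoodT k (Fin m)) (hW : GoodT k (Fin n)) :
    GoodT k (Fin (m + n)) := (hV.sum hW).equiv finSumFinEquiv

theorem adjInd_symm {V : Type*} (G : SimpleGraph V) (u v : V) : adjInd G u v = adjInd G v u := by
  exact adjInd_congr _ _ _ _ _ _ (G.adj_comm u v)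

theorem inside_le {V : Type*} [Fintype V] (G : SimpleGraph V) (S : Finset V) :
    ∑ u ∈ S, ∑ v ∈ S, adjInd G u v ≤ S.card * (S.card - 1) := by
  classical
  rw [← smul_eq_mul]
  refine Finset.sum_le_card_nsmul _ _ _ fun u hu => ?_
  rw [← Finset.add_sum_erase S _ hu, ← Finset.card_erase_of_mem hu]
  have : adjInd G u u = 0 := by simp [adjInd]
  rw [this, zero_add, Finset.card_eq_sum_ones]
  refine Finset.sum_le_sum fun v _ => ?_
  unfold adjInd; split_ifs <;> omega

theorem cut_ge {V : Type*} [Fintype V] [DecidableEq V] (k : ℕ) (G : SimpleGraph V)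
    (hreg : ∀ v, ∑ w, adjInd G v w = k)
    (S : Finset V) (h0 : 0 < S.card) (hk : S.card ≤ k) :
    k ≤ ∑ u ∈ S, ∑ v ∈ Sᶜ, adjInd G u v := by
  have h1 : ∑ u ∈ S, ∑ v ∈ S, adjInd G u v + ∑ u ∈ S, ∑ v ∈ Sᶜ, adjInd G u v = S.card * k := by
    rw [← Finset.sum_add_distrib]
    simp [Finset.sum_add_sum_compl, hreg]
  have h2 := inside_le G S
  obtain ⟨s, hs⟩ : ∃ s, S.card = s + 1 := ⟨S.card - 1, by omega⟩
  obtain ⟨t, ht⟩ := Nat.exists_eq_add_of_le hk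
  rw [hs] at h1 h2 ht
  simp only [Nat.add_sub_cancel] at h2
  subst ht
  nlinarith [Nat.zero_le (s * t)]

theorem cut_ge' {V : Type*} [Fintype V] [DecidableEq V] (k : ℕ) (G : SimpleGraph V)
    (hreg : ∀ v, ∑ w, adjInd G v w = k) (hm : Fintype.card V ≤ 2 * k + 1)
    (S : Finset V) (h0 : 0 < S.card) (h1 : 0 < Sᶜ.card) :
    k ≤ ∑ u ∈ S, ∑ v ∈ Sᶜ, adjInd G u v := by
  have := Finset.card_add_card_compl S
  by_cases h : S.card ≤ k
  · exact cut_ge k G hreg S h0 h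
  · have := cut_ge k G hreg Sᶜ h1 (by omega)
    rw [compl_compl, Finset.sum_comm] at this
    simpa only [adjInd_symm G] using this.trans (le_of_eq (Finset.sum_congr rfl fun u _ =>
      Finset.sum_congr rfl fun v _ => adjInd_symm G _ _))

theorem core {V : Type*} [Fintype V] [DecidableEq V] (k : ℕ) (G : SimpleGraph V)
    (hreg : ∀ v, ∑ w, adjInd G v w = k) (hm : Fintype.card V ≤ 2 * k + 1)
    (hfull : ∀ S : Finset V, Sᶜ.card < S.card → 2 * k ≤ ∑ u ∈ S, ∑ v ∈ S, adjInd G u v) :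
    GoodG k G := by
  refine ⟨hreg, fun c hc => ?_⟩
  let P : Fin 3 → Finset V := fun i => Finset.univ.filter (fun v => c v = i)
  let x : Fin 3 → Fin 3 → ℕ := fun i j => ∑ u ∈ P i, ∑ v ∈ P j, adjInd G u v
  have xs : ∀ i j, x i j = x j i := by
    intro i j
    simp only [x]
    rw [Finset.sum_comm]
    exact Finset.sum_congr rfl fun u _ => Finset.sum_congr rfl fun v _ => adjInd_symm G _ _
  have split : ∀ f : V → ℕ, ∑ v, f v = ∑ v ∈ P 0, f v + ∑ v ∈ P 1, f v + ∑ v ∈ P 2, f v := by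
    intro f
    simp only [P, Finset.sum_filter, ← Finset.sum_add_distrib]
    refine Finset.sum_congr rfl fun v _ => ?_
    generalize c v = i
    fin_cases i <;> simp
  have hdeg : ∀ i, x i 0 + x i 1 + x i 2 = (P i).card * k := by
    intro i
    simp only [x, ← Finset.sum_add_distrib, ← split, hreg]
    simp
  have hW : ∑ u, ∑ v, adjInd G u v * wgt (c u) (c v) = x 0 0 + x 0 2 + x 2 0 := by
    simp only [x, P, Finset.sum_filter, ← Finset.sum_add_distrib]
    refine Finset.sum_congr rfl fun u _ => ?_
    generalize c u = i
    have : ∀ v, adjInd G u v * wgt i (c v) = (if i = 0 then (if c v = 0 then adjInd G u v else 0) else 0) + (if i = 0 then (if c v = 2 then adjInd G u v else 0) else 0) + (if i = 2 then (if c v = 0 then adjInd G u v else 0) else 0) := by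
      intro v
      generalize c v = j
      fin_cases i <;> fin_cases j <;> simp [wgt]
    simp only [this, Finset.sum_add_distrib]
    split_ifs <;> simp
  have hc' : (P 1).card < (P 0).card := by simpa [P] using hc
  rw [hW]
  by_contra hlt
  push Not at hlt
  have d0 := hdeg 0
  have d1 := hdeg 1
  have s01 := xs 0 1
  have s02 := xs 0 2
  have s12 := xs 1 2
  have hmul : (P 1).card * k + k ≤ (P 0).card * k := by nlinarith
  have hcompl : (P 2)ᶜ = P 0 ∪ P 1 := by
    ext v
    simp only [P, Finset.mem_compl, Finset.mem_filter, Finset.mem_univ, true_and, Finset.mem_union]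
    generalize c v = i
    fin_cases i <;> simp
  have hd01 : Disjoint (P 0) (P 1) := by
    simp only [P]
    rw [Finset.disjoint_filter]
    intro v _ h; rw [h]; decide
  by_cases h2 : 0 < (P 2).card
  · have := cut_ge' k G hreg hm (P 2) h2 (by
      rw [hcompl, Finset.card_union_of_disjoint hd01]; omega)
    rw [hcompl] at this
    simp only [Finset.sum_union hd01, Finset.sum_add_distrib] at this
    change k ≤ x 2 0 + x 2 1 at this
    omega
  · have h2e : P 2 = ∅ := by
      rw [← Finset.card_eq_zero]; omega
    have : (P 0)ᶜ = P 1 := by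
      have h3 : P 0 ∪ P 1 = Finset.univ := by rw [← hcompl, h2e, Finset.compl_empty]
      ext v
      have h4 : v ∈ P 0 ∪ P 1 := by rw [h3]; simp
      have h5 : v ∈ P 0 → v ∉ P 1 := fun a b => Finset.disjoint_left.mp hd01 a b
      simp only [Finset.mem_union, Finset.mem_compl] at h4 ⊢
      tauto
    have := hfull (P 0) (by rw [this]; exact hc')
    change 2 * k ≤ x 0 0 at this
    omega

theorem good_even {V : Type*} [Fintype V] [DecidableEq V] (k : ℕ) (G : SimpleGraph V)
    (hreg : ∀ v, ∑ w, adjInd G v w = k) (hm : Fintype.card V ≤ 2 * k + 1)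
    (he : Even (Fintype.card V)) : GoodG k G := by
  refine core k G hreg hm fun S hS => ?_
  have hc := Finset.card_add_card_compl S
  obtain ⟨q, hq⟩ := he
  have h2 : Sᶜ.card + 2 ≤ S.card := by omega
  have h1 : ∑ u ∈ S, ∑ v ∈ S, adjInd G u v + ∑ u ∈ S, ∑ v ∈ Sᶜ, adjInd G u v = S.card * k := by
    rw [← Finset.sum_add_distrib]
    simp [Finset.sum_add_sum_compl, hreg]
  have h3 : ∑ u ∈ S, ∑ v ∈ Sᶜ, adjInd G u v ≤ Sᶜ.card * k := by
    rw [Finset.sum_comm, ← smul_eq_mul]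
    refine Finset.sum_le_card_nsmul _ _ _ fun v _ => ?_
    rw [← hreg v]
    calc _ = ∑ u ∈ S, adjInd G v u := Finset.sum_congr rfl fun u _ => adjInd_symm G _ _
      _ ≤ _ := Finset.sum_le_sum_of_subset (Finset.subset_univ _)
  nlinarith

theorem good_complete (k : ℕ) (hk : 6 ≤ k) : GoodT k (Fin (k + 1)) := by
  have hin : ∀ S : Finset (Fin (k+1)), ∀ u ∈ S, ∑ v ∈ S, adjInd (⊤ : SimpleGraph (Fin (k+1))) u v = S.card - 1 := by
    intro S u hu
    rw [← Finset.add_sum_erase S _ hu, ← Finset.card_erase_of_mem hu, Finset.card_eq_sum_ones]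
    simp only [adjInd, SimpleGraph.top_adj, ne_eq, not_true_eq_false, if_false, zero_add]
    refine Finset.sum_congr rfl fun v hv => ?_
    rw [if_pos]
    exact fun h => (Finset.mem_erase.mp hv).1 h.symm
  refine ⟨⊤, core k _ ?_ ?_ ?_⟩
  · intro v
    rw [hin _ _ (Finset.mem_univ v)]; simp
  · simp; omega
  · intro S hS
    have hc := Finset.card_add_card_compl S
    simp only [Fintype.card_fin] at hc
    rw [Finset.sum_congr rfl (hin S), Finset.sum_const, smul_eq_mul]
    obtain ⟨s, hs⟩ : ∃ s, S.card = s + 1 := ⟨S.card - 1, by omega⟩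
    rw [hs, Nat.add_sub_cancel]
    have : k ≤ 2 * s := by omega
    have : 3 ≤ s := by omega
    nlinarith

/-- Two complete halves joined by a circulant bipartite graph. -/
def evenG (h : ℕ) [NeZero h] (D : Finset (ZMod h)) : SimpleGraph (ZMod h ⊕ ZMod h) where
  Adj
    | Sum.inl i, Sum.inl j => i ≠ j
    | Sum.inr i, Sum.inr j => i ≠ j
    | Sum.inl i, Sum.inr j => j - i ∈ D
    | Sum.inr j, Sum.inl i => j - i ∈ D
  symm := by
    constructor
    rintro (i | i) (j | j) hij <;> first | exact hij | exact hij.symm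
  loopless := by
    constructor
    rintro (i | i) hi <;> exact hi rfl

theorem good_evenT (k h : ℕ) (h1 : k + 1 ≤ 2 * h) (h2 : h ≤ k) : GoodT k (Fin (2 * h)) := by
  have : NeZero h := ⟨by omega⟩
  obtain ⟨D, hD⟩ : ∃ D : Finset (ZMod h), D.card = k + 1 - h := by
    obtain ⟨D, _, hD⟩ := Finset.exists_subset_card_eq (s := (Finset.univ : Finset (ZMod h)))
      (n := k + 1 - h) (by rw [Finset.card_univ, ZMod.card]; omega)
    exact ⟨D, hD⟩
  have key : GoodT k (ZMod h ⊕ ZMod h) := by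
    have hne : ∀ i : ZMod h, (∑ j : ZMod h, if i = j then 0 else 1) = h - 1 := by
      intro i
      have : ∑ j : ZMod h, (if i = j then 0 else 1) = ((Finset.univ : Finset (ZMod h)).erase i).card := by
        rw [Finset.card_eq_sum_ones, ← Finset.add_sum_erase _ _ (Finset.mem_univ i)]
        simp only [if_true, zero_add]
        refine Finset.sum_congr rfl fun v hv => ?_
        rw [if_neg]
        exact fun h => (Finset.mem_erase.mp hv).1 h.symm
      rw [this, Finset.card_erase_of_mem (Finset.mem_univ i), Finset.card_univ, ZMod.card]
    refine ⟨evenG h D, good_even k _ ?_ ?_ ?_⟩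
    · rintro (i | i)
      · have e : ∑ j : ZMod h, (if j - i ∈ D then 1 else 0) = D.card := by
          rw [← Equiv.sum_comp (Equiv.addRight i)]
          simp
        have e1 : ∀ j, adjInd (evenG h D) (Sum.inl i) (Sum.inl j) = if i = j then 0 else 1 := by
          intro j
          rw [adjInd_eq _ _ _ (¬ i = j) Iff.rfl, ite_not]
        have e2 : ∀ j, adjInd (evenG h D) (Sum.inl i) (Sum.inr j) = if j - i ∈ D then 1 else 0 :=
          fun j => adjInd_eq _ _ _ _ Iff.rfl
        simp only [Fintype.sum_sum_type, e1, e2, hne, e, hD]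
        omega
      · have e : ∑ j : ZMod h, (if i - j ∈ D then 1 else 0) = D.card := by
          rw [← Equiv.sum_comp (Equiv.subLeft i)]
          simp
        have e1 : ∀ j, adjInd (evenG h D) (Sum.inr i) (Sum.inr j) = if i = j then 0 else 1 := by
          intro j
          rw [adjInd_eq _ _ _ (¬ i = j) Iff.rfl, ite_not]
        have e2 : ∀ j, adjInd (evenG h D) (Sum.inr i) (Sum.inl j) = if i - j ∈ D then 1 else 0 :=
          fun j => adjInd_eq _ _ _ _ Iff.rfl
        simp only [Fintype.sum_sum_type, e1, e2, hne, e, hD]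
        omega
    · rw [Fintype.card_sum, ZMod.card]; omega
    · rw [Fintype.card_sum, ZMod.card]; exact ⟨h, rfl⟩
  exact key.equiv (Fintype.equivOfCardEq (by rw [Fintype.card_sum, ZMod.card, Fintype.card_fin]; omega))

theorem good_mul (k l : ℕ) (hk : 6 ≤ k) : GoodT k (Fin ((l + 1) * (k + 1))) := by
  induction l with
  | zero => rw [zero_add, one_mul]; exact good_complete k hk
  | succ l ih =>
    have := ih.add (good_complete k hk)
    rwa [← Nat.succ_mul] at this

theorem good_mul_add (k l m : ℕ) (hk : 6 ≤ k) (hm : GoodT k (Fin m)) :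
    GoodT k (Fin (l * (k + 1) + m)) := by
  cases l with
  | zero => rw [zero_mul, zero_add]; exact hm
  | succ l => exact (good_mul k l hk).add hm

theorem good_exists (n k l r : ℕ) (hk6 : 6 ≤ k) (hkn : k ≤ n - 1)
    (hdecomp : n = l * (k + 1) + r) (hr : r ≤ k)
    (hcase : r = 0 ∨ (1 ≤ r ∧ Odd (k + r)) ∨
      (1 ≤ r ∧ Even (k + r) ∧ Even k ∧ 2 ≤ l)) : GoodT k (Fin n) := by
  have hl : l ≠ 0 := by rintro rfl; omega
  rcases hcase with rfl | ⟨h1, q, hq⟩ | ⟨h1, ⟨q, hq⟩, ⟨p, hp⟩, hl2⟩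
  · obtain ⟨l, rfl⟩ := Nat.exists_eq_succ_of_ne_zero hl
    rw [hdecomp]
    exact good_mul k l hk6
  · obtain ⟨l, rfl⟩ := Nat.exists_eq_succ_of_ne_zero hl
    have : n = l * (k + 1) + 2 * (q + 1) := by rw [hdecomp, Nat.succ_mul]; omega
    rw [this]
    exact good_mul_add k l _ hk6 (good_evenT k (q + 1) (by omega) (by omega))
  · obtain ⟨l, rfl⟩ := Nat.exists_eq_add_of_le hl2
    have : n = l * (k + 1) + (2 * (p + 1) + 2 * q) := by rw [hdecomp, Nat.add_mul]; omega
    rw [this]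
    exact good_mul_add k l _ hk6 ((good_evenT k (p + 1) (by omega) (by omega)).add
      (good_evenT k q (by omega) (by omega)))

theorem hall_fpm {V : Type*} [Fintype V] [DecidableEq V] (H : SimpleGraph V)
    (σ : V → V) (hσ : Function.Injective σ) (ha : ∀ v, H.Adj v (σ v)) : H.HasFPM := by
  have hb : Function.Bijective σ := Finite.injective_iff_bijective.mp hσ
  let f : Sym2 V → ℝ := fun e => ∑ v : V, if s(v, σ v) = e then (1/2 : ℝ) else 0
  have hsum : ∀ v : V, ∑ e ∈ Finset.univ.filter (fun e : Sym2 V => v ∈ e), f e = 1 := by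
    intro v
    simp only [f]
    rw [Finset.sum_comm]
    have : ∀ u : V, ∑ e ∈ Finset.univ.filter (fun e : Sym2 V => v ∈ e),
        (if s(u, σ u) = e then (1/2 : ℝ) else 0) =
        (if u = v then 1/2 else 0) + (if σ u = v then 1/2 else 0) := by
      intro u
      rw [Finset.sum_ite_eq]
      have hne := (ha u).ne
      simp only [Finset.mem_filter, Finset.mem_univ, true_and, Sym2.mem_iff]
      by_cases h1 : u = v
      · subst h1
        simp [hne.symm]
      · by_cases h2 : σ u = v
        · subst h2; simp [hne]
        · simp [h1, h2, Ne.symm h1, Ne.symm h2]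
    simp only [this, Finset.sum_add_distrib]
    rw [hb.sum_comp (fun w => if w = v then (1/2 : ℝ) else 0)]
    norm_num
  have hnn : ∀ e, 0 ≤ f e := fun e => Finset.sum_nonneg fun v _ => by split_ifs <;> norm_num
  refine ⟨f, fun e => ⟨hnn e, ?_⟩, ?_, hsum⟩
  · induction e with
    | _ a b =>
      rw [← hsum a]
      exact Finset.single_le_sum (fun e _ => hnn e) (by simp)
  · intro e he
    refine Finset.sum_eq_zero fun v _ => ?_
    rw [if_neg]
    rintro rfl
    exact he (ha v)

theorem good_robust {V : Type*} [Fintype V] [DecidableEq V] (k : ℕ) (G : SimpleGraph V)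
    (hG : GoodG k G) (F : Finset (Sym2 V)) (hF : F.card < k) :
    (G.deleteEdges (F : Set (Sym2 V))).HasFPM := by
  classical
  let t : V → Finset V := fun v => Finset.univ.filter (fun w => (G.deleteEdges (F : Set (Sym2 V))).Adj v w)
  by_cases hall : ∀ s : Finset V, s.card ≤ (s.biUnion t).card
  · obtain ⟨σ, h1, h2⟩ := (Finset.all_card_le_biUnion_card_iff_exists_injective t).mp hall
    exact hall_fpm _ σ h1 fun v => by simpa [t] using h2 v
  exfalso
  push Not at hall
  obtain ⟨A, hA⟩ := hall
  set B := A.biUnion t with hB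
  let c : V → Fin 3 := fun v => if v ∈ A \ B then 0 else if v ∈ B \ A then 1 else 2
  have c0 : ∀ v, c v = 0 ↔ v ∈ A \ B := by
    intro v; simp only [c]; split_ifs with h1 h2
    · simp only [h1]
    · simp only [h1]; decide
    · simp only [h1]; decide
  have c1 : ∀ v, c v = 1 ↔ v ∈ B \ A := by
    intro v; simp only [c]; split_ifs with h1 h2
    · have : v ∉ B \ A := by simp only [Finset.mem_sdiff] at h1 ⊢; tauto
      simp only [this]; decide
    · simp only [h2]
    · simp only [h2]; decide
  have hlt := hG.2 c (by
    simp only [c0, c1, Finset.sum_boole, Finset.filter_mem_eq_inter, Finset.univ_inter]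
    have := Finset.card_sdiff_lt_card_sdiff_iff.mpr hA
    exact_mod_cast this)
  have hind : ∀ u v, c u = 0 → c v ≠ 1 → G.Adj u v → s(u, v) ∈ F := by
    intro u v hu hv hadj
    by_contra hn
    have hadj' : (G.deleteEdges (F : Set (Sym2 V))).Adj u v := by
      simp [SimpleGraph.deleteEdges_adj, hadj, hn]
    rw [c0, Finset.mem_sdiff] at hu
    rw [Ne, c1, Finset.mem_sdiff] at hv
    have hvB : v ∈ B := Finset.mem_biUnion.mpr ⟨u, hu.1, by simpa [t] using hadj'⟩
    have hvA : v ∈ A := by by_contra h; exact hv ⟨hvB, h⟩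
    exact hu.2 (Finset.mem_biUnion.mpr ⟨v, hvA, by simpa [t] using hadj'.symm⟩)
  have hbound : ∑ u, ∑ v, adjInd G u v * wgt (c u) (c v) ≤
      ((Finset.univ : Finset (V × V)).filter (fun p => s(p.1, p.2) ∈ F)).card := by
    rw [Finset.card_filter, Fintype.sum_prod_type]
    refine Finset.sum_le_sum fun u _ => Finset.sum_le_sum fun v _ => ?_
    unfold adjInd wgt
    by_cases hadj : G.Adj u v
    · by_cases hw : (c u = 0 ∧ c v = 0) ∨ (c u = 0 ∧ c v = 2) ∨ (c u = 2 ∧ c v = 0)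
      · have : s(u, v) ∈ F := by
          rcases hw with ⟨a, b⟩ | ⟨a, b⟩ | ⟨a, b⟩
          · exact hind u v a (by rw [b]; decide) hadj
          · exact hind u v a (by rw [b]; decide) hadj
          · rw [Sym2.eq_swap]
            exact hind v u b (by rw [a]; decide) hadj.symm
        simp [hadj, hw, this]
      · simp [hw]
    · simp [hadj]
  have hcard : ((Finset.univ : Finset (V × V)).filter (fun p => s(p.1, p.2) ∈ F)).card ≤ 2 * F.card := by
    refine Finset.card_le_mul_card_image_of_maps_to (f := fun p : V × V => s(p.1, p.2)) (by simp) 2 ?_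
    intro e _
    induction e with
    | _ a b =>
      refine (Finset.card_le_card (t := {(a, b), (b, a)}) ?_).trans Finset.card_le_two
      rintro ⟨x, y⟩ hxy
      simp only [Finset.mem_filter, Sym2.eq_iff] at hxy
      simp only [Finset.mem_insert, Finset.mem_singleton, Prod.mk.injEq]
      exact hxy.2
  omega

theorem degree_eq {V : Type*} [Fintype V] (G : SimpleGraph V) [DecidableRel G.Adj] (v : V) :
    G.degree v = ∑ w, adjInd G v w := by
  classical
  unfold adjInd
  rw [← SimpleGraph.card_neighborFinset_eq_degree, SimpleGraph.neighborFinset_eq_filter, Finset.card_filter]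
  refine Finset.sum_congr rfl fun w _ => ?_
  congr

theorem fmp_le_degree {V : Type*} [Fintype V] [DecidableEq V] (G : SimpleGraph V)
    [DecidableRel G.Adj] (v : V) : G.fmp ≤ G.degree v := by
  refine Nat.sInf_le ⟨G.incidenceFinset v, ?_, SimpleGraph.card_incidenceFinset_eq_degree G v, ?_⟩
  · simpa using SimpleGraph.incidenceSet_subset G v
  · rintro ⟨f, _, h2, h3⟩
    have := h3 v
    rw [Finset.sum_eq_zero] at this
    · norm_num at this
    · intro e he
      refine h2 e fun hh => ?_
      rw [SimpleGraph.edgeSet_deleteEdges] at hh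
      refine hh.2 ?_
      simpa [SimpleGraph.incidenceSet] using ⟨hh.1, (Finset.mem_filter.mp he).2⟩

theorem good_fmp {V : Type*} [Fintype V] [DecidableEq V] [Nonempty V] (k : ℕ) (G : SimpleGraph V)
    (hG : GoodG k G) : G.fmp = k := by
  classical
  obtain ⟨v⟩ := ‹Nonempty V›
  have hle := fmp_le_degree G v
  rw [degree_eq, hG.1] at hle
  refine le_antisymm hle ?_
  refine le_csInf ?_ ?_
  · by_contra hne
    rw [Set.not_nonempty_iff_eq_empty] at hne
    have := Set.eq_empty_iff_forall_notMem.mp hne (G.degree v)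
    refine this ⟨G.incidenceFinset v, ?_, SimpleGraph.card_incidenceFinset_eq_degree G v, ?_⟩
    · simpa using SimpleGraph.incidenceSet_subset G v
    · rintro ⟨f, _, h2, h3⟩
      have := h3 v
      rw [Finset.sum_eq_zero] at this
      · norm_num at this
      · intro e he
        refine h2 e fun hh => ?_
        rw [SimpleGraph.edgeSet_deleteEdges] at hh
        refine hh.2 ?_
        simpa [SimpleGraph.incidenceSet] using ⟨hh.1, (Finset.mem_filter.mp he).2⟩
  · rintro b ⟨F, _, rfl, hF⟩
    by_contra hlt
    exact hF (good_robust k G hG F (by omega))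

theorem two_mul_edges {V : Type*} [Fintype V] (G : SimpleGraph V) [DecidableRel G.Adj] :
    ∑ v, G.degree v = 2 * G.edgeSet.ncard := by
  classical
  rw [SimpleGraph.sum_degrees_eq_twice_card_edges, ← SimpleGraph.coe_edgeFinset, Set.ncard_coe_finset]

end

theorem s_nk_case1 (n k l r : ℕ) (hn : 1 ≤ n) (hk6 : 6 ≤ k) (hkn : k ≤ n - 1)
    (hdecomp : n = l * (k + 1) + r) (hr : r ≤ k)
    (hcase : r = 0 ∨ (1 ≤ r ∧ Odd (k + r)) ∨
      (1 ≤ r ∧ Even (k + r) ∧ Even k ∧ 2 ≤ l)) :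
    ∃ m : ℕ, 2 * m = n * k ∧
      IsLeast {m : ℕ | ∃ G : SimpleGraph (Fin n), G.fmp = k ∧ G.edgeSet.ncard = m} m := by
  classical
  obtain ⟨G, hG⟩ := good_exists n k l r hk6 hkn hdecomp hr hcase
  have : Nonempty (Fin n) := ⟨⟨0, hn⟩⟩
  have hedge : 2 * G.edgeSet.ncard = n * k := by
    rw [← two_mul_edges]
    simp [degree_eq, hG.1]
  refine ⟨G.edgeSet.ncard, hedge, ⟨G, good_fmp k G hG, rfl⟩, ?_⟩
  rintro m ⟨H, hH, rfl⟩
  have h1 := two_mul_edges H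
  have h2 : n * k ≤ ∑ v, H.degree v := by
    calc n * k = ∑ _v : Fin n, k := by simp
      _ ≤ _ := Finset.sum_le_sum fun v _ => by rw [← hH]; exact fmp_le_degree H v
  omega
end

section
/- Let n and k be positive integers with 6 ≤ k ≤ n − 2, and write n = ℓ·(k+1) + r with 0 ≤ r ≤ k. If r ≥ 1, k + r is even, and ℓ = 1, then ⌈nk/2⌉ ≤ s(n,k) ≤ (n−1)(k+2)/2. -/
open Finset

variable {V : Type*}

namespace FMPAux

lemma key {W : Type*} [Fintype W] [DecidableEq W] (G : SimpleGraph W) [DecidableRel G.Adj]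
    (F : Finset (Sym2 W)) (d : ℕ)
    (hdeg : ∀ v, d ≤ (univ.filter (fun w => G.Adj v w)).card)
    (A B : Finset W) (hAB : Fintype.card W + 1 ≤ A.card + B.card)
    (hF : ∀ v ∈ A, ∀ w ∈ B, G.Adj v w → s(v, w) ∈ F) :
    A.card * d ≤ F.card + A.card.choose 2 + A.card * (A.card - 1) ∧
    A.card * d ≤ 2 * F.card + A.card * (A.card - 1) := by
  classical
  set P : Finset (W × W) := (A ×ˢ B).filter (fun p => G.Adj p.1 p.2) with hP
  have h1 : A.card * d ≤ P.card + A.card * (A.card - 1) := by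
    have hPc : P.card = ∑ v ∈ A, (B.filter (fun w => G.Adj v w)).card := by
      rw [hP, Finset.card_filter, Finset.sum_product]
      refine Finset.sum_congr rfl fun v _ => ?_
      rw [Finset.card_filter]
    have : ∀ v ∈ A, d ≤ (B.filter (fun w => G.Adj v w)).card + (A.card - 1) := by
      intro v _
      have h2 : (univ.filter (fun w => G.Adj v w)).card
          ≤ (B.filter (fun w => G.Adj v w)).card + (Bᶜ).card := by
        refine le_trans (Finset.card_le_card ?_) (Finset.card_union_le _ _)
        intro w hw
        simp only [mem_filter, mem_univ, true_and, mem_union, mem_compl] at hw ⊢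
        tauto
      have h3 := hdeg v
      rw [Finset.card_compl] at h2
      omega
    have h4 := Finset.sum_le_sum this
    rw [Finset.sum_add_distrib, ← hPc] at h4
    simpa using h4
  set O := A.offDiag.image Sym2.mk.uncurry with hO
  have hOc : O.card = A.card.choose 2 := Sym2.card_image_offDiag A
  have h5 : P.card ≤ F.card + (F.filter (fun e => e ∈ O)).card := by
    rw [Finset.card_eq_sum_card_fiberwise (f := fun p : W × W => s(p.1, p.2)) (t := F)]
    · rw [Finset.card_filter, Finset.card_eq_sum_ones, ← Finset.sum_add_distrib]
      refine Finset.sum_le_sum fun e _ => ?_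
      by_cases he : e ∈ O
      · rw [if_pos he]
        induction e using Sym2.ind with
        | _ x y =>
        refine le_trans (Finset.card_le_card (t := {(x, y), (y, x)}) ?_) Finset.card_le_two
        rintro ⟨u, v⟩ huv
        simp only [mem_filter, Sym2.eq_iff] at huv
        simp only [mem_insert, mem_singleton, Prod.mk.injEq]
        tauto
      · rw [if_neg he]
        refine Finset.card_le_one.2 ?_
        rintro ⟨u, v⟩ huv ⟨x, y⟩ hxy
        simp only [mem_filter, hP, mem_product] at huv hxy
        obtain ⟨⟨⟨hu, hv⟩, hadj⟩, rfl⟩ := huv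
        obtain ⟨⟨⟨hx, hy⟩, hadj'⟩, h⟩ := hxy
        rw [Sym2.eq_iff] at h
        rcases h with ⟨rfl, rfl⟩ | ⟨rfl, rfl⟩
        · rfl
        · exfalso
          apply he
          rw [hO, Finset.mem_image]
          exact ⟨(y, x), by simp [Finset.mem_offDiag, hu, hx, hadj.ne], rfl⟩
    · rintro ⟨u, v⟩ huv
      simp only [hP, coe_filter, Set.mem_ofPred_eq, mem_product] at huv
      exact hF u huv.1.1 v huv.1.2 huv.2
  have h6 : (F.filter (fun e => e ∈ O)).card ≤ F.card := Finset.card_filter_le _ _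
  have h7 : (F.filter (fun e => e ∈ O)).card ≤ O.card :=
    Finset.card_le_card (fun e he => (Finset.mem_filter.1 he).2)
  omega

lemma core {W : Type*} [Fintype W] [DecidableEq W] (G : SimpleGraph W) [DecidableRel G.Adj]
    (F : Finset (Sym2 W)) (d : ℕ)
    (hdeg : ∀ v, d ≤ (univ.filter (fun w => G.Adj v w)).card)
    (harith : ∀ a, 1 ≤ a → 2 * a ≤ Fintype.card W + 1 →
      F.card + a.choose 2 + a * (a - 1) < a * d ∨ 2 * F.card + a * (a - 1) < a * d) :
    ∃ σ : W → W, Function.Injective σ ∧ ∀ v, G.Adj v (σ v) ∧ s(v, σ v) ∉ F := by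
  classical
  set t : W → Finset W := fun v => univ.filter (fun w => G.Adj v w ∧ s(v, w) ∉ F) with ht
  have hall := (Finset.all_card_le_biUnion_card_iff_exists_injective t)
  have key' : ∀ A B : Finset W, 1 ≤ A.card → 2 * A.card ≤ Fintype.card W + 1 →
      Fintype.card W + 1 ≤ A.card + B.card →
      (∀ v ∈ A, ∀ w ∈ B, G.Adj v w → s(v, w) ∈ F) → False := by
    intro A B h1 h2 h3 h4
    have := key G F d hdeg A B h3 h4
    have := harith A.card h1 h2
    omega
  have hH : ∀ s : Finset W, s.card ≤ (s.biUnion t).card := by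
    intro A
    by_contra hA
    push Not at hA
    set B := (A.biUnion t)ᶜ with hB
    have hBc : B.card = Fintype.card W - (A.biUnion t).card := Finset.card_compl _
    have hle := Finset.card_le_univ (A.biUnion t)
    have hAle := Finset.card_le_univ A
    have hBle := Finset.card_le_univ B
    have hF : ∀ v ∈ A, ∀ w ∈ B, G.Adj v w → s(v, w) ∈ F := by
      intro v hv w hw hadj
      by_contra hc
      rw [hB, Finset.mem_compl] at hw
      exact hw (Finset.mem_biUnion.2 ⟨v, hv, by simp [ht, hadj, hc]⟩)
    by_cases c1 : 2 * A.card ≤ Fintype.card W + 1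
    · exact key' A B (by omega) c1 (by omega) hF
    by_cases c2 : 2 * B.card ≤ Fintype.card W + 1
    · refine key' B A (by omega) c2 (by omega) ?_
      intro v hv w hw h
      rw [Sym2.eq_swap]
      exact hF w hw v hv h.symm
    obtain ⟨A', hA', hc⟩ := Finset.exists_subset_card_eq (s := A)
      (n := (Fintype.card W + 1) / 2) (by omega)
    exact key' A' B (by omega) (by omega) (by omega) (fun v hv => hF v (hA' hv))
  obtain ⟨σ, hσ, hm⟩ := hall.1 hH
  refine ⟨σ, hσ, fun v => ?_⟩
  have := hm v
  simpa [ht] using this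

lemma fpm_of_perm {W : Type*} [Fintype W] [DecidableEq W] (G : SimpleGraph W)
    (σ : W → W) (hσ : Function.Injective σ) (h : ∀ v, G.Adj v (σ v)) : G.HasFPM := by
  classical
  have hbij : Function.Bijective σ := Finite.injective_iff_bijective.1 hσ
  set f : Sym2 W → ℝ := fun e => ∑ v, if e = s(v, σ v) then (1 / 2 : ℝ) else 0 with hf
  have h0 : ∀ e, 0 ≤ f e := fun e => Finset.sum_nonneg fun v _ => by split_ifs <;> norm_num
  have hsum : ∀ u : W, ∑ e ∈ Finset.univ.filter (fun e : Sym2 W => u ∈ e), f e = 1 := by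
    intro u
    rw [Finset.sum_comm]
    have : ∀ v, (∑ e ∈ Finset.univ.filter (fun e : Sym2 W => u ∈ e),
        if e = s(v, σ v) then (1 / 2 : ℝ) else 0)
        = (if v = u then (1 / 2 : ℝ) else 0) + (if σ v = u then (1 / 2 : ℝ) else 0) := by
      intro v
      rw [Finset.sum_ite_eq']
      simp only [mem_filter, mem_univ, true_and, Sym2.mem_iff]
      have := (h v).ne
      by_cases h1 : v = u
      · subst h1
        simp [this.symm]
      · by_cases h2 : σ v = u
        · simp [h2, h1]
        · simp [h1, h2, Ne.symm h1, Ne.symm h2, eq_comm]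
    rw [Finset.sum_congr rfl (fun v _ => this v), Finset.sum_add_distrib,
      (Function.Bijective.sum_comp hbij (fun w => if w = u then (1 / 2 : ℝ) else 0))]
    simp
    norm_num
  refine ⟨f, fun e => ⟨h0 e, ?_⟩, ?_, hsum⟩
  · induction e using Sym2.ind with
    | _ x y =>
    rw [← hsum x]
    exact Finset.single_le_sum (f := f) (fun e _ => h0 e) (by simp)
  · intro e he
    refine Finset.sum_eq_zero fun v _ => ?_
    rw [if_neg]
    rintro rfl
    exact he (h v)

lemma not_fpm_incidence {W : Type*} [Fintype W] [DecidableEq W] (G : SimpleGraph W) (v : W)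
    (h : ∀ w, ¬ G.Adj v w) : ¬ G.HasFPM := by
  rintro ⟨f, _, h2, h3⟩
  have := h3 v
  rw [Finset.sum_eq_zero] at this
  · norm_num at this
  · intro e he
    apply h2
    intro hG
    simp only [mem_filter, mem_univ, true_and] at he
    obtain ⟨w, rfl⟩ := he
    exact h w hG

lemma le_degree {W : Type*} [Fintype W] [DecidableEq W] (G : SimpleGraph W)
    [DecidableRel G.Adj] (v : W) : G.fmp ≤ G.degree v := by
  classical
  refine Nat.sInf_le ⟨G.incidenceFinset v, ?_, G.card_incidenceFinset_eq_degree v, ?_⟩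
  · intro e he
    rw [SimpleGraph.coe_incidenceFinset] at he
    exact he.1
  · refine not_fpm_incidence _ v ?_
    intro w hw
    rw [SimpleGraph.deleteEdges_adj] at hw
    apply hw.2
    rw [SimpleGraph.coe_incidenceFinset]
    exact ⟨hw.1, by simp⟩

lemma lower {n k : ℕ} (G : SimpleGraph (Fin n)) (h : G.fmp = k) :
    (n * k + 1) / 2 ≤ G.edgeSet.ncard := by
  classical
  have h1 := G.sum_degrees_eq_twice_card_edges
  have h2 : ∑ v : Fin n, k ≤ ∑ v, G.degree v :=
    Finset.sum_le_sum fun v _ => h ▸ le_degree G v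
  have h3 : G.edgeSet.ncard = G.edgeFinset.card := by
    rw [← SimpleGraph.coe_edgeFinset, Set.ncard_coe_finset]
  simp only [sum_const, card_univ, Fintype.card_fin, smul_eq_mul] at h2
  omega

lemma fmp_ge {n k : ℕ} (hn : 1 ≤ n) (G : SimpleGraph (Fin n))
    (h : ∀ F : Finset (Sym2 (Fin n)), F.card < k → (G.deleteEdges ↑F).HasFPM) :
    k ≤ G.fmp := by
  classical
  refine le_csInf ?_ ?_
  · refine ⟨_, G.edgeFinset, by simp, rfl, ?_⟩
    refine not_fpm_incidence _ ⟨0, hn⟩ ?_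
    intro w hw
    simp [SimpleGraph.deleteEdges_adj] at hw
  · rintro m ⟨F, _, rfl, hF⟩
    by_contra hc
    exact hF (h F (by omega))

lemma descend {n k : ℕ} (hk : 1 ≤ k) (G : SimpleGraph (Fin n)) (h : k ≤ G.fmp) :
    ∃ G' : SimpleGraph (Fin n), G'.fmp = k ∧ G'.edgeSet.ncard ≤ G.edgeSet.ncard := by
  classical
  have hne := Nat.nonempty_of_pos_sInf (lt_of_lt_of_le hk h : 0 < G.fmp)
  obtain ⟨F, hFG, hFc, hF⟩ := Nat.sInf_mem hne
  change F.card = G.fmp at hFc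
  obtain ⟨F', hF', hc⟩ := Finset.exists_subset_card_eq (s := F) (n := G.fmp - k) (by omega)
  have hmem : ∃ F1 : Finset (Sym2 (Fin n)), ↑F1 ⊆ (G.deleteEdges ↑F').edgeSet ∧ F1.card = k ∧
    ¬ ((G.deleteEdges ↑F').deleteEdges ↑F1).HasFPM := by
    refine ⟨F \ F', ?_, ?_, ?_⟩
    · intro e he
      rw [Finset.coe_sdiff] at he
      rw [SimpleGraph.edgeSet_deleteEdges]
      exact ⟨hFG he.1, he.2⟩
    · rw [Finset.card_sdiff_of_subset hF']
      omega
    · rw [SimpleGraph.deleteEdges_deleteEdges, ← Finset.coe_union,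
        Finset.union_sdiff_of_subset hF']
      exact hF
  refine ⟨G.deleteEdges ↑F', le_antisymm (Nat.sInf_le hmem) ?_, ?_⟩
  · refine le_csInf ⟨k, hmem⟩ ?_
    rintro m ⟨F2, h1, rfl, h2⟩
    have : G.fmp ≤ (F' ∪ F2).card := by
      refine Nat.sInf_le ⟨F' ∪ F2, ?_, rfl, ?_⟩
      · rw [Finset.coe_union]
        refine Set.union_subset (fun e he => hFG (hF' he)) (fun e he => ?_)
        have := h1 he
        rw [SimpleGraph.edgeSet_deleteEdges] at this
        exact this.1
      · rw [Finset.coe_union, ← SimpleGraph.deleteEdges_deleteEdges]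
        exact h2
    have := Finset.card_union_le F' F2
    omega
  · refine Set.ncard_le_ncard ?_ (Set.toFinite _)
    rw [SimpleGraph.edgeSet_deleteEdges]
    exact Set.sdiff_subset

/-- Sum graph. -/
def sumG (n s : ℕ) [NeZero n] : SimpleGraph (Fin n) where
  Adj x y := x ≠ y ∧ (x + y).val < s
  symm := ⟨fun x y h => ⟨h.1.symm, by rw [add_comm]; exact h.2⟩⟩
  loopless := ⟨fun x h => h.1 rfl⟩

lemma card_lt (n s : ℕ) (hs : s ≤ n) :
    (univ.filter (fun x : Fin n => x.val < s)).card = s := by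
  rw [Fin.card_filter_val_lt]
  omega

lemma card_shift (n s : ℕ) [NeZero n] (hs : s ≤ n) (v : Fin n) :
    (univ.filter (fun x : Fin n => (v + x).val < s)).card = s := by
  refine Eq.trans ?_ (card_lt n s hs)
  refine Finset.card_bij (fun x _ => v + x) ?_ ?_ ?_
  · intro x hx; simpa using hx
  · intro x _ y _ h; exact add_left_cancel h
  · intro y hy; exact ⟨-v + y, by simpa using hy, by simp⟩

lemma sum_adj (n s : ℕ) [NeZero n] (hs : s ≤ n) (v : Fin n) [DecidableRel (sumG n s).Adj] :
    (univ.filter (fun x : Fin n => (sumG n s).Adj v x)).card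
      + (if (v + v).val < s then 1 else 0) = s := by
  classical
  have h1 : (univ.filter (fun x : Fin n => (sumG n s).Adj v x))
      = (univ.filter (fun x : Fin n => (v + x).val < s)).erase v := by
    ext x
    rw [Finset.mem_filter, Finset.mem_erase, Finset.mem_filter]
    simp [sumG, eq_comm]
  have h2 := card_shift n s hs v
  rw [h1]
  by_cases h : (v + v).val < s
  · rw [if_pos h, Finset.card_erase_add_one (by simpa using h), h2]
  · rw [if_neg h, Finset.erase_eq_of_notMem (by simpa using h), h2, add_zero]

lemma double_inj (n : ℕ) [NeZero n] (hn : Odd n) : Function.Injective (fun x : Fin n => x + x) := by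
  intro x y h
  simp only [Fin.ext_iff, Fin.val_add] at h
  have hx := x.isLt
  have hy := y.isLt
  obtain ⟨q, hq⟩ := hn
  ext
  by_cases c1 : x.val + x.val < n <;> by_cases c2 : y.val + y.val < n
  · rw [Nat.mod_eq_of_lt c1, Nat.mod_eq_of_lt c2] at h; omega
  · rw [Nat.mod_eq_of_lt c1, Nat.mod_eq_sub_mod (by omega), Nat.mod_eq_of_lt (by omega)] at h
    omega
  · rw [Nat.mod_eq_of_lt c2, Nat.mod_eq_sub_mod (by omega), Nat.mod_eq_of_lt (by omega)] at h
    omega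
  · rw [Nat.mod_eq_sub_mod (by omega), Nat.mod_eq_of_lt (by omega),
      Nat.mod_eq_sub_mod (by omega), Nat.mod_eq_of_lt (by omega)] at h
    omega

lemma sum_edges (n s : ℕ) [NeZero n] (hn : Odd n) (hs : s ≤ n) :
    2 * (sumG n s).edgeSet.ncard = (n - 1) * s := by
  classical
  have h1 := (sumG n s).sum_degrees_eq_twice_card_edges
  have h3 : (sumG n s).edgeSet.ncard = (sumG n s).edgeFinset.card := by
    rw [← SimpleGraph.coe_edgeFinset, Set.ncard_coe_finset]
  have h4 : ∑ v, ((sumG n s).degree v + (if (v + v).val < s then 1 else 0)) = n * s := by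
    rw [Finset.sum_congr rfl (g := fun _ => s)]
    · simp
    · intro v _
      rw [← SimpleGraph.card_neighborFinset_eq_degree, SimpleGraph.neighborFinset_eq_filter]
      exact sum_adj n s hs v
  have h5 : ∑ v : Fin n, (if (v + v).val < s then 1 else 0) = s := by
    have hb : Function.Bijective (fun x : Fin n => x + x) :=
      Finite.injective_iff_bijective.1 (double_inj n hn)
    rw [Function.Bijective.sum_comp hb (fun w : Fin n => if w.val < s then 1 else 0),
      ← Finset.card_filter, card_lt n s hs]
  rw [Finset.sum_add_distrib, h5] at h4
  rw [h3, ← h1, Nat.sub_mul, one_mul]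
  omega

lemma case_small {n k : ℕ} (hn : Odd n) (h1 : k + 2 ≤ n) (h2 : n ≤ 2 * k - 1) :
    ∃ G : SimpleGraph (Fin n), k ≤ G.fmp ∧ 2 * G.edgeSet.ncard ≤ (n - 1) * (k + 2) := by
  classical
  haveI : NeZero n := ⟨by omega⟩
  refine ⟨sumG n (k + 2), ?_, (sum_edges n (k + 2) hn h1).le⟩
  refine fmp_ge (by omega) _ fun F hF => ?_
  have hcore := core (sumG n (k + 2)) F (k + 1)
  suffices hs : _ ∧ _ by
    obtain ⟨σ, hσ, h⟩ := hcore hs.1 hs.2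
    refine fpm_of_perm _ σ hσ fun v => ?_
    rw [SimpleGraph.deleteEdges_adj]
    exact h v
  refine ⟨?_, ?_⟩
  · intro v
    have := sum_adj n (k + 2) h1 v
    split_ifs at this <;> omega
  · intro a ha h2a
    rw [Fintype.card_fin] at h2a
    rcases Nat.lt_or_ge a 2 with h | h
    · left
      have : a = 1 := by omega
      subst this
      simp
      omega
    · right
      obtain ⟨b, rfl⟩ := Nat.exists_eq_add_of_le h
      obtain ⟨c, rfl⟩ : ∃ c, k = 2 + b + c := ⟨k - (2 + b), by omega⟩
      rw [show 2 + b - 1 = b + 1 by omega]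
      nlinarith

open Classical in
/-- The members of `F` inside `C`. -/
noncomputable def inside {V : Type*} (F : Finset (Sym2 V)) (C : Finset V) : Finset (Sym2 V) :=
  F.filter (fun e => ∀ v ∈ e, v ∈ C)

lemma mem_inside {V : Type*} {F : Finset (Sym2 V)} {C : Finset V} {e : Sym2 V} :
    e ∈ inside F C ↔ e ∈ F ∧ ∀ v ∈ e, v ∈ C := by
  simp [inside]

lemma inside_subset {V : Type*} (F : Finset (Sym2 V)) (C : Finset V) : inside F C ⊆ F :=
  fun _ he => (mem_inside.1 he).1

lemma clique {V : Type*} [Fintype V] [DecidableEq V] (C : Finset V) (F : Finset (Sym2 V))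
    (hC : 6 ≤ C.card) (hF : (inside F C).card + 2 ≤ C.card) :
    ∃ σ : C → C, Function.Injective σ ∧ ∀ v, v ≠ σ v ∧ s((v : V), (σ v : V)) ∉ F := by
  classical
  set F' : Finset (Sym2 C) := univ.filter (fun e => e.map Subtype.val ∈ F) with hF'
  have hc : F'.card ≤ (inside F C).card := by
    refine Finset.card_le_card_of_injOn (fun e => e.map Subtype.val) ?_ ?_
    · intro e he
      simp only [hF', inside, coe_filter, Set.mem_ofPred_eq, mem_univ, true_and] at he ⊢
      refine ⟨he, ?_⟩
      intro v hv
      rw [Sym2.mem_map] at hv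
      obtain ⟨w, _, rfl⟩ := hv
      exact w.2
    · exact (Sym2.map.injective Subtype.val_injective).injOn
  have hcore := core (⊤ : SimpleGraph C) F' (C.card - 1)
  suffices hs : _ ∧ _ by
    obtain ⟨σ, hσ, h⟩ := hcore hs.1 hs.2
    refine ⟨σ, hσ, fun v => ⟨(h v).1, fun hm => (h v).2 ?_⟩⟩
    simp [hF', hm]
  refine ⟨?_, ?_⟩
  · intro v
    have : (univ.filter (fun w => (⊤ : SimpleGraph C).Adj v w)) = univ.erase v := by
      ext w
      simp [eq_comm]
    rw [this, Finset.card_erase_of_mem (mem_univ _)]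
    simp
  · intro a ha h2a
    rw [Fintype.card_coe] at h2a
    have hf : F'.card + 2 ≤ C.card := by omega
    generalize F'.card = f at *
    generalize C.card = m at *
    rcases Nat.lt_or_ge a 3 with h | h
    · left
      have : a = 1 ∨ a = 2 := by omega
      rcases this with rfl | rfl
      · simp; omega
      · simp; omega
    · right
      obtain ⟨b, rfl⟩ := Nat.exists_eq_add_of_le h
      obtain ⟨c, rfl⟩ : ∃ c, m = 5 + 2 * b + c := ⟨m - (5 + 2 * b), by omega⟩
      rw [show 3 + b - 1 = b + 2 by omega, show 5 + 2 * b + c - 1 = 4 + 2 * b + c by omega]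
      rcases Nat.eq_zero_or_pos b with rfl | hb
      · omega
      · nlinarith

lemma glue {V : Type*} [Fintype V] [DecidableEq V] (G : SimpleGraph V) (C : Finset V)
    (F : Finset (Sym2 V))
    (hG1 : ∀ x ∈ C, ∀ y ∈ C, x ≠ y → G.Adj x y)
    (hG2 : ∀ x ∈ Cᶜ, ∀ y ∈ Cᶜ, x ≠ y → G.Adj x y)
    (h6 : 6 ≤ C.card) (h6' : 6 ≤ Cᶜ.card)
    (hF1 : (inside F C).card + 2 ≤ C.card)
    (hF2 : (inside F Cᶜ).card + 2 ≤ Cᶜ.card) :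
    (G.deleteEdges ↑F).HasFPM := by
  classical
  obtain ⟨σ, hσ, h⟩ := clique C F h6 hF1
  obtain ⟨τ, hτ, h'⟩ := clique Cᶜ F h6' hF2
  refine fpm_of_perm _ (fun v => if hv : v ∈ C then (σ ⟨v, hv⟩ : V)
    else (τ ⟨v, Finset.mem_compl.2 hv⟩ : V)) ?_ ?_
  · intro x y hxy
    by_cases hx : x ∈ C <;> by_cases hy : y ∈ C
    · simp only [hx, hy, dif_pos] at hxy
      simpa using hσ (Subtype.ext hxy)
    · simp only [hx, hy, dif_pos, dif_neg, not_false_iff] at hxy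
      exact absurd (hxy ▸ (σ ⟨x, hx⟩).2) (Finset.mem_compl.1 (τ ⟨y, Finset.mem_compl.2 hy⟩).2)
    · simp only [hx, hy, dif_pos, dif_neg, not_false_iff] at hxy
      exact absurd (hxy ▸ (σ ⟨y, hy⟩).2) (Finset.mem_compl.1 (τ ⟨x, Finset.mem_compl.2 hx⟩).2)
    · simp only [hx, hy, dif_neg, not_false_iff] at hxy
      simpa using hτ (Subtype.ext hxy)
  · intro v
    rw [SimpleGraph.deleteEdges_adj]
    by_cases hv : v ∈ C
    · simp only [hv, dif_pos]
      have := h ⟨v, hv⟩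
      exact ⟨hG1 _ hv _ (σ ⟨v, hv⟩).2 (fun e => this.1 (Subtype.ext e)), this.2⟩
    · simp only [hv, dif_neg, not_false_iff]
      have := h' ⟨v, Finset.mem_compl.2 hv⟩
      exact ⟨hG2 _ (Finset.mem_compl.2 hv) _ (τ ⟨v, Finset.mem_compl.2 hv⟩).2
        (fun e => this.1 (Subtype.ext e)), this.2⟩

/-- Two cliques of order `k + 1` sharing a vertex. -/
def twoK (k : ℕ) : SimpleGraph (Fin (2 * k + 1)) where
  Adj x y := x ≠ y ∧ ((x.val ≤ k ∧ y.val ≤ k) ∨ (k ≤ x.val ∧ k ≤ y.val))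
  symm := ⟨fun x y h => ⟨h.1.symm, by tauto⟩⟩
  loopless := ⟨fun x h => h.1 rfl⟩

lemma case_large {k : ℕ} (hk : 6 ≤ k) :
    ∃ G : SimpleGraph (Fin (2 * k + 1)), k ≤ G.fmp ∧
      2 * G.edgeSet.ncard ≤ (2 * k + 1 - 1) * (k + 2) := by
  classical
  have cle : ∀ s, s ≤ 2 * k + 1 →
      (univ.filter (fun x : Fin (2 * k + 1) => x.val < s)).card = s := card_lt (2 * k + 1)
  set C1 : Finset (Fin (2 * k + 1)) := univ.filter (fun x => x.val < k + 1) with hC1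
  set P1 : Finset (Fin (2 * k + 1)) := univ.filter (fun x => x.val < k) with hP1
  have c1 : C1.card = k + 1 := cle _ (by omega)
  have p1 : P1.card = k := cle _ (by omega)
  have c1' : C1ᶜ.card = k := by rw [Finset.card_compl, c1, Fintype.card_fin]; omega
  have p1' : P1ᶜ.card = k + 1 := by rw [Finset.card_compl, p1, Fintype.card_fin]; omega
  refine ⟨twoK k, ?_, ?_⟩
  · refine fmp_ge (by omega) _ fun F hF => ?_
    have hle : ∀ C : Finset (Fin (2 * k + 1)), (inside F C).card ≤ F.card :=
      fun C => Finset.card_le_card (inside_subset F C)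
    have hdisj : (inside F C1ᶜ).card
        + (inside F P1).card ≤ F.card := by
      rw [← Finset.card_union_of_disjoint]
      · exact Finset.card_le_card (Finset.union_subset (inside_subset _ _) (inside_subset _ _))
      · rw [Finset.disjoint_left]
        intro e he he'
        induction e using Sym2.ind with
        | _ x y =>
        have h1 := (mem_inside.1 he).2 x (by simp)
        have h2 := (mem_inside.1 he').2 x (by simp)
        simp only [hC1, hP1, mem_compl, mem_filter, mem_univ, true_and] at h1 h2
        omega
    by_cases hc : (inside F C1ᶜ).card + 2 ≤ k
    · refine glue _ C1 F ?_ ?_ (by omega) (by omega) ?_ (by omega)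
      · intro x hx y hy hxy
        simp only [hC1, mem_filter, mem_univ, true_and] at hx hy
        exact ⟨hxy, by omega⟩
      · intro x hx y hy hxy
        simp only [hC1, mem_compl, mem_filter, mem_univ, true_and] at hx hy
        exact ⟨hxy, by omega⟩
      · have := hle C1
        omega
    · refine glue _ P1 F ?_ ?_ (by omega) (by omega) (by omega) ?_
      · intro x hx y hy hxy
        simp only [hP1, mem_filter, mem_univ, true_and] at hx hy
        exact ⟨hxy, by omega⟩
      · intro x hx y hy hxy
        simp only [hP1, mem_compl, mem_filter, mem_univ, true_and] at hx hy
        exact ⟨hxy, by omega⟩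
      · have := hle P1ᶜ
        omega
  · have hsub : (twoK k).edgeSet ⊆
        ↑(C1.offDiag.image Sym2.mk.uncurry ∪ (P1ᶜ).offDiag.image Sym2.mk.uncurry) := by
      intro e he
      induction e using Sym2.ind with
      | _ x y =>
      obtain ⟨hxy, h⟩ : x ≠ y ∧ ((x.val ≤ k ∧ y.val ≤ k) ∨ (k ≤ x.val ∧ k ≤ y.val)) := he
      rw [Finset.mem_coe, Finset.mem_union, Finset.mem_image, Finset.mem_image]
      rcases h with h | h
      · left
        refine ⟨(x, y), ?_, rfl⟩
        simp only [hC1, mem_offDiag, mem_filter, mem_univ, true_and]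
        exact ⟨by omega, by omega, hxy⟩
      · right
        refine ⟨(x, y), ?_, rfl⟩
        simp only [hP1, mem_offDiag, mem_compl, mem_filter, mem_univ, true_and]
        exact ⟨by omega, by omega, hxy⟩
    have h1 := Set.ncard_le_ncard hsub (Set.toFinite _)
    rw [Set.ncard_coe_finset] at h1
    have h2 := h1.trans (Finset.card_union_le _ _)
    rw [Sym2.card_image_offDiag, Sym2.card_image_offDiag, c1, p1', Nat.choose_two_right] at h2
    have h3 : (k + 1) * (k + 1 - 1) / 2 * 2 ≤ (k + 1) * (k + 1 - 1) := Nat.div_mul_le_self _ _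
    simp only [Nat.add_sub_cancel] at h2 h3 ⊢
    nlinarith

end FMPAux

theorem s_nk_case3 (n k l r : ℕ) (hn : 1 ≤ n) (hk6 : 6 ≤ k) (hkn : k ≤ n - 2)
    (hdecomp : n = l * (k + 1) + r) (hr : r ≤ k)
    (hcase : 1 ≤ r ∧ Even (k + r) ∧ l = 1) :
    ∃ m : ℕ,
      IsLeast {m : ℕ | ∃ G : SimpleGraph (Fin n), G.fmp = k ∧ G.edgeSet.ncard = m} m ∧
      (n * k + 1) / 2 ≤ m ∧ 2 * m ≤ (n - 1) * (k + 2) := by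
  classical
  obtain ⟨hr1, hev, rfl⟩ := hcase
  have hodd : Odd n := by
    obtain ⟨q, hq⟩ := hev
    exact ⟨q, by omega⟩
  have hG : ∃ G : SimpleGraph (Fin n), k ≤ G.fmp ∧ 2 * G.edgeSet.ncard ≤ (n - 1) * (k + 2) := by
    by_cases hrk : r = k
    · have : n = 2 * k + 1 := by omega
      subst this
      exact FMPAux.case_large hk6
    · have : r + 2 ≤ k := by
        obtain ⟨q, hq⟩ := hev
        omega
      exact FMPAux.case_small hodd (by omega) (by omega)
  obtain ⟨G, hG1, hG2⟩ := hG
  obtain ⟨G', hG'1, hG'2⟩ := FMPAux.descend (by omega) G hG1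
  have hne : {m : ℕ | ∃ G : SimpleGraph (Fin n), G.fmp = k ∧ G.edgeSet.ncard = m}.Nonempty :=
    ⟨_, G', hG'1, rfl⟩
  refine ⟨sInf {m : ℕ | ∃ G : SimpleGraph (Fin n), G.fmp = k ∧ G.edgeSet.ncard = m},
    ⟨Nat.sInf_mem hne, fun m hm => Nat.sInf_le hm⟩, ?_, ?_⟩
  · obtain ⟨H, hH1, hH2⟩ := Nat.sInf_mem hne
    rw [← hH2]
    exact FMPAux.lower H hH1
  · have : sInf {m : ℕ | ∃ G : SimpleGraph (Fin n), G.fmp = k ∧ G.edgeSet.ncard = m}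
        ≤ G'.edgeSet.ncard := Nat.sInf_le ⟨G', hG'1, rfl⟩
    omega
end

section
/- Let n ≥ 9 be an odd positive integer. Then s(n,2) = n + 3; that is, the minimum number of edges of a graph of order n with fractional matching preclusion number 2 equals n + 3. -/
open Finset

variable {V : Type*}

namespace FMPaux

open Classical in
/-- Fractional perfect matching as a symmetric weight function on pairs. -/
structure FP {V : Type*} [Fintype V] (G : SimpleGraph V) (f : V → V → ℝ) : Prop where
  symm : ∀ u v, f u v = f v u
  nonneg : ∀ u v, 0 ≤ f u v
  supp : ∀ u v, ¬ G.Adj u v → f u v = 0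
  sum : ∀ u, ∑ v, f u v = 1

section core
open Classical

variable [Fintype V] {G : SimpleGraph V}

set_option linter.unusedSectionVars false

/-- number of neighbours of `v` in `S` -/
noncomputable def dS (G : SimpleGraph V) (v : V) (S : Finset V) : ℕ :=
  (S.filter (fun u => G.Adj v u)).card

/-- ordered pairs of adjacent vertices inside `A` -/
noncomputable def MP (G : SimpleGraph V) (A : Finset V) : Finset (V × V) :=
  (A ×ˢ A).filter (fun q => G.Adj q.1 q.2)

lemma mem_MP {A : Finset V} {q : V × V} :
    q ∈ MP G A ↔ q.1 ∈ A ∧ q.2 ∈ A ∧ G.Adj q.1 q.2 := by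
  simp [MP, and_assoc]

lemma FP.le_one {f : V → V → ℝ} (h : FP G f) (u v : V) : f u v ≤ 1 := by
  rw [← h.sum u]
  exact Finset.single_le_sum (fun w _ => h.nonneg u w) (Finset.mem_univ v)

lemma FP.two_le_one {f : V → V → ℝ} (h : FP G f) (u v w : V) (hvw : v ≠ w) :
    f u v + f u w ≤ 1 := by
  rw [← h.sum u, ← Finset.sum_pair hvw]
  exact Finset.sum_le_sum_of_subset_of_nonneg (Finset.subset_univ _)
    (fun w _ _ => h.nonneg u w)

lemma exists_edge (H : ∀ a b : V, ∃ f, FP G f ∧ f a b = 0) (A : Finset V)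
    (hA : Aᶜ.card < A.card) (a b : V) :
    ∃ u ∈ A, ∃ v ∈ A, G.Adj u v ∧ s(u, v) ≠ s(a, b) := by
  by_contra hc
  push Not at hc
  obtain ⟨f, hf, hab⟩ := H a b
  have h0 : ∀ u ∈ A, ∀ v ∈ A, f u v = 0 := by
    intro u hu v hv
    by_cases huv : G.Adj u v
    · have := hc u hu v hv huv
      rw [Sym2.eq_iff] at this
      rcases this with ⟨rfl, rfl⟩ | ⟨rfl, rfl⟩
      · exact hab
      · rw [hf.symm]; exact hab
    · exact hf.supp _ _ huv
  have h1 : (A.card : ℝ) = ∑ u ∈ A, ∑ v ∈ Aᶜ, f u v := by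
    have : (A.card : ℝ) = ∑ u ∈ A, ∑ v, f u v := by simp [hf.sum]
    rw [this]
    refine Finset.sum_congr rfl fun u hu => ?_
    rw [← Finset.sum_add_sum_compl A, Finset.sum_eq_zero (fun v hv => h0 u hu v hv), zero_add]
  have h2 : ∑ u ∈ A, ∑ v ∈ Aᶜ, f u v ≤ (Aᶜ.card : ℝ) := by
    rw [Finset.sum_comm]
    have : (Aᶜ.card : ℝ) = ∑ v ∈ Aᶜ, ∑ u, f v u := by simp [hf.sum]
    rw [this]
    refine Finset.sum_le_sum fun v _ => ?_
    rw [Finset.sum_congr rfl (fun u _ => hf.symm u v)]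
    exact Finset.sum_le_sum_of_subset_of_nonneg (Finset.subset_univ _)
      (fun w _ _ => hf.nonneg v w)
  rw [← h1] at h2
  have : A.card ≤ Aᶜ.card := by exact_mod_cast h2
  omega

lemma four_le_MP (H : ∀ a b : V, ∃ f, FP G f ∧ f a b = 0) (A : Finset V)
    (hA : Aᶜ.card < A.card) : 4 ≤ (MP G A).card := by
  have hne : A.Nonempty := by
    rw [← Finset.card_pos]; omega
  obtain ⟨o, ho⟩ := hne
  obtain ⟨a, ha, b, hb, hab, -⟩ := exists_edge H A hA o o
  obtain ⟨u, hu, v, hv, huv, hne⟩ := exists_edge H A hA a b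
  have hsub : ({(a, b), (b, a), (u, v), (v, u)} : Finset (V × V)) ⊆ MP G A := by
    intro q hq
    simp only [Finset.mem_insert, Finset.mem_singleton] at hq
    rw [mem_MP]
    rcases hq with rfl | rfl | rfl | rfl
    · exact ⟨ha, hb, hab⟩
    · exact ⟨hb, ha, hab.symm⟩
    · exact ⟨hu, hv, huv⟩
    · exact ⟨hv, hu, huv.symm⟩
  refine le_trans (le_of_eq ?_) (Finset.card_le_card hsub)
  have h1 := hab.ne
  have h2 := huv.ne
  rw [Ne, Sym2.eq_iff] at hne
  push Not at hne
  symm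
  rw [Finset.card_insert_of_notMem, Finset.card_insert_of_notMem, Finset.card_insert_of_notMem,
    Finset.card_singleton]
  · simp; grind
  · simp; grind
  · simp; grind

lemma card_MP (A : Finset V) : (MP G A).card = ∑ v ∈ A, dS G v A := by
  unfold MP dS
  rw [Finset.card_filter, Finset.sum_product]
  simp only [Finset.card_filter]

lemma cross_comm (A B : Finset V) : ∑ v ∈ A, dS G v B = ∑ v ∈ B, dS G v A := by
  unfold dS
  simp only [Finset.card_filter]
  rw [Finset.sum_comm]
  simp [G.adj_comm]

lemma dS_add (v : V) (A : Finset V) : dS G v A + dS G v Aᶜ = dS G v univ := by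
  unfold dS
  rw [← Finset.card_union_of_disjoint, ← Finset.filter_union]
  · simp
  · exact Finset.disjoint_filter_filter disjoint_compl_right

/-- every 2-colouring has at least three monochromatic edges -/
lemma six_le (H : ∀ a b : V, ∃ f, FP G f ∧ f a b = 0) (hodd : Odd (Fintype.card V))
    (hex : ∑ v, dS G v univ ≤ 2 * Fintype.card V + 4)
    (A : Finset V) : 6 ≤ (MP G A).card + (MP G Aᶜ).card := by
  have key : ∀ A : Finset V, Aᶜ.card < A.card → 6 ≤ (MP G A).card + (MP G Aᶜ).card := by
    intro A hA
    by_contra hlt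
    push Not at hlt
    have h4 := four_le_MP H A hA
    have hB : MP G Aᶜ = ∅ := by
      by_contra hne
      obtain ⟨q, hq⟩ := Finset.nonempty_iff_ne_empty.mpr hne
      have : ({(q.1, q.2), (q.2, q.1)} : Finset (V × V)) ⊆ MP G Aᶜ := by
        intro z hz
        simp only [Finset.mem_insert, Finset.mem_singleton] at hz
        rw [mem_MP] at hq ⊢
        rcases hz with rfl | rfl
        · exact hq
        · exact ⟨hq.2.1, hq.1, hq.2.2.symm⟩
      have h2 := Finset.card_le_card this
      rw [Finset.card_pair] at h2
      · omega
      · have := (mem_MP.1 hq).2.2.ne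
        grind
    have hcard : A.card + Aᶜ.card = Fintype.card V := Finset.card_add_card_compl A
    obtain ⟨k, hk⟩ := hodd
    by_cases h3 : Aᶜ.card + 3 ≤ A.card
    · obtain ⟨q, hq⟩ := Finset.card_pos.1 (by omega : 0 < (MP G A).card)
      have hq' := mem_MP.1 hq
      have hc1 : (A.erase q.1).card = A.card - 1 := Finset.card_erase_of_mem hq'.1
      have hc2 := Finset.card_add_card_compl (A.erase q.1)
      have h4' := four_le_MP H (A.erase q.1) (by omega)
      have hsub : MP G (A.erase q.1) ∪ {(q.1, q.2), (q.2, q.1)} ⊆ MP G A := by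
        intro z hz
        simp only [Finset.mem_union, Finset.mem_insert, Finset.mem_singleton] at hz
        rw [mem_MP]
        rcases hz with hz | rfl | rfl
        · rw [mem_MP] at hz
          exact ⟨Finset.mem_of_mem_erase hz.1, Finset.mem_of_mem_erase hz.2.1, hz.2.2⟩
        · exact hq'
        · exact ⟨hq'.2.1, hq'.1, hq'.2.2.symm⟩
      have hle := Finset.card_le_card hsub
      rw [Finset.card_union_of_disjoint, Finset.card_pair] at hle
      · omega
      · have := hq'.2.2.ne
        grind
      · rw [Finset.disjoint_right]
        intro z hz
        simp only [Finset.mem_insert, Finset.mem_singleton] at hz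
        rw [mem_MP]
        rcases hz with rfl | rfl <;> simp
    · have h1 : A.card = Aᶜ.card + 1 := by omega
      have hd : ∀ v ∈ A, 2 ≤ dS G v Aᶜ := by
        intro v hv
        have hv' : v ∉ Aᶜ := by simpa using hv
        have hc1 : (insert v Aᶜ).card = Aᶜ.card + 1 := Finset.card_insert_of_notMem hv'
        have hc2 := Finset.card_add_card_compl (insert v Aᶜ)
        have h4' := four_le_MP H (insert v Aᶜ) (by omega)
        have hsub : MP G (insert v Aᶜ) ⊆
            ((Aᶜ.filter (fun u => G.Adj v u)).image (fun u => (v, u))) ∪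
            ((Aᶜ.filter (fun u => G.Adj v u)).image (fun u => (u, v))) := by
          intro q hq
          rw [mem_MP] at hq
          obtain ⟨a, b⟩ := q
          simp only [Finset.mem_insert] at hq
          simp only [Finset.mem_union, Finset.mem_image, Finset.mem_filter, Prod.mk.injEq]
          obtain ⟨h1, h2, h3⟩ := hq
          rcases h1 with rfl | h1
          · rcases h2 with rfl | h2
            · exact absurd h3 (G.loopless.irrefl _)
            · left; exact ⟨b, ⟨h2, h3⟩, rfl, rfl⟩
          · rcases h2 with rfl | h2
            · right; exact ⟨a, ⟨h1, h3.symm⟩, rfl, rfl⟩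
            · exfalso
              have : (a, b) ∈ MP G Aᶜ := mem_MP.2 ⟨h1, h2, h3⟩
              rw [hB] at this
              simp at this
        have hle := (Finset.card_le_card hsub).trans (Finset.card_union_le _ _)
        have i1 := Finset.card_image_le (s := Aᶜ.filter (fun u => G.Adj v u)) (f := fun u => (v, u))
        have i2 := Finset.card_image_le (s := Aᶜ.filter (fun u => G.Adj v u)) (f := fun u => (u, v))
        unfold dS
        omega
      have hsplit : ∑ v, dS G v univ = (MP G A).card + ∑ v ∈ A, dS G v Aᶜ +
          (∑ v ∈ Aᶜ, dS G v A + (MP G Aᶜ).card) := by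
        rw [card_MP, card_MP, ← Finset.sum_add_distrib, ← Finset.sum_add_distrib,
          ← Finset.sum_add_sum_compl A]
        simp only [dS_add]
      rw [cross_comm Aᶜ A, hB] at hsplit
      have hge : 2 * A.card ≤ ∑ v ∈ A, dS G v Aᶜ := by
        have := Finset.card_nsmul_le_sum A (fun v => dS G v Aᶜ) 2 hd
        simpa [mul_comm] using this
      simp at hsplit
      omega
  have hcard : A.card + Aᶜ.card = Fintype.card V := Finset.card_add_card_compl A
  obtain ⟨k, hk⟩ := hodd
  rcases lt_or_gt_of_ne (by omega : Aᶜ.card ≠ A.card) with h | h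
  · exact key A h
  · have := key Aᶜ (by simpa using h)
    rw [compl_compl] at this
    omega


lemma prop_three {P Q : Prop} (c : Q ↔ ¬ P) : ¬ (P ↔ Q) := by
  tauto

lemma prop_one {P Q s t : Prop} (c : Q ↔ ¬ P) (h1 : t → s) (h2 : s → t) :
    ¬ ((P ↔ s) ↔ (Q ↔ t)) := by
  tauto

lemma prop_two {P Q s t : Prop} (c : P ↔ Q) (h1 : s) (h2 : ¬ t) :
    ¬ ((P ↔ s) ↔ (Q ↔ t)) := by
  tauto

lemma FP.exists_pos {f : V → V → ℝ} (h : FP G f) (v : V) : ∃ u, G.Adj v u ∧ f v u ≠ 0 := by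
  by_contra hc
  push Not at hc
  have : ∑ u, f v u = 0 := Finset.sum_eq_zero fun u _ => by
    by_cases hu : G.Adj v u
    · exact hc u hu
    · exact h.supp _ _ hu
  rw [h.sum] at this
  norm_num at this

lemma exists_other (H : ∀ a b : V, ∃ f, FP G f ∧ f a b = 0) (v w : V) :
    ∃ u, G.Adj v u ∧ u ≠ w := by
  obtain ⟨f, hf, h0⟩ := H v w
  obtain ⟨u, hu, hne⟩ := hf.exists_pos v
  refine ⟨u, hu, ?_⟩
  rintro rfl
  exact hne h0

/-- The weighted-sum relation across a branch `S` that is properly coloured and has exactly two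
edges leaving it. -/
lemma branch_rel {f : V → V → ℝ} (hf : FP G f) (y : V → ℝ) (S : Finset V) (x z w v : V)
    (hin : ∀ a ∈ S, ∀ b ∈ S, G.Adj a b → y a = - y b)
    (hout : ∀ a ∈ S, ∀ b ∉ S, G.Adj a b → (a = x ∧ b = z) ∨ (a = w ∧ b = v))
    (hx : x ∈ S) (hz : z ∉ S) (hw : w ∈ S) (hv : v ∉ S) (hne : (x, z) ≠ (w, v)) :
    ∑ a ∈ S, y a = y x * f x z + y w * f w v := by
  have h1 : ∑ a ∈ S, y a = ∑ a ∈ S, ∑ b ∈ S, y a * f a b + ∑ a ∈ S, ∑ b ∈ Sᶜ, y a * f a b := by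
    rw [← Finset.sum_add_distrib]
    refine Finset.sum_congr rfl fun a _ => ?_
    rw [Finset.sum_add_sum_compl, ← Finset.mul_sum, hf.sum, mul_one]
  have h2 : ∑ a ∈ S, ∑ b ∈ S, y a * f a b = 0 := by
    have : ∑ a ∈ S, ∑ b ∈ S, y a * f a b = - ∑ a ∈ S, ∑ b ∈ S, y a * f a b := by
      conv_lhs => rw [Finset.sum_comm]
      rw [← Finset.sum_neg_distrib]
      refine Finset.sum_congr rfl fun a ha => ?_
      rw [← Finset.sum_neg_distrib]
      refine Finset.sum_congr rfl fun b hb => ?_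
      by_cases hab : G.Adj a b
      · rw [hin a ha b hb hab, hf.symm b a]; ring
      · rw [hf.supp a b hab, hf.symm b a, hf.supp a b hab]; ring
    linarith
  have h3 : ∑ a ∈ S, ∑ b ∈ Sᶜ, y a * f a b = y x * f x z + y w * f w v := by
    rw [← Finset.sum_product' (f := fun a b => y a * f a b)]
    rw [← Finset.sum_pair (f := fun q : V × V => y q.1 * f q.1 q.2) hne]
    symm
    apply Finset.sum_subset
    · intro q hq
      simp only [Finset.mem_insert, Finset.mem_singleton] at hq
      rcases hq with rfl | rfl <;> simp [*]
    · rintro ⟨a, b⟩ hq hq'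
      simp only [Finset.mem_product, Finset.mem_compl] at hq
      by_cases hab : G.Adj a b
      · exfalso; apply hq'
        rcases hout a hq.1 b hq.2 hab with ⟨rfl, rfl⟩ | ⟨rfl, rfl⟩ <;> simp
      · simp [hf.supp a b hab]
  rw [h1, h2, h3, zero_add]

/-- Consequence of the branch relation when `f x z` can be both `0` and `1`. -/
lemma branch_val (H : ∀ a b : V, ∃ f, FP G f ∧ f a b = 0) (y : V → ℝ)
    (hy : ∀ a, y a = 1 ∨ y a = -1) (S : Finset V) (x z w v : V)
    (hin : ∀ a ∈ S, ∀ b ∈ S, G.Adj a b → y a = - y b)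
    (hout : ∀ a ∈ S, ∀ b ∉ S, G.Adj a b → (a = x ∧ b = z) ∨ (a = w ∧ b = v))
    (hx : x ∈ S) (hz : z ∉ S) (hw : w ∈ S) (hv : v ∉ S) (hne : (x, z) ≠ (w, v))
    (hwv : y w = - y v) (h1 : ∃ f, FP G f ∧ f x z = 1) {f : V → V → ℝ} (hf : FP G f) :
    (y x = y v → f w v = f x z) ∧ (y x = - y v → f w v = 1 - f x z) := by
  obtain ⟨f0, hf0, h00⟩ := H x z
  obtain ⟨f1, hf1, h11⟩ := h1
  have r := branch_rel hf y S x z w v hin hout hx hz hw hv hne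
  have r0 := branch_rel hf0 y S x z w v hin hout hx hz hw hv hne
  have r1 := branch_rel hf1 y S x z w v hin hout hx hz hw hv hne
  rw [h00] at r0
  rw [h11] at r1
  have a1 := hf0.le_one w v
  have a2 := hf0.nonneg w v
  have b1 := hf1.le_one w v
  have b2 := hf1.nonneg w v
  constructor
  · intro hxv
    rcases hy v with h | h <;> rw [hxv, hwv, h] at r r0 r1 <;> linarith
  · intro hxv
    rcases hy v with h | h <;> rw [hxv, hwv, h] at r r0 r1 <;> linarith

set_option maxHeartbeats 2000000 in
theorem core (hconn : G.Connected) (H : ∀ a b : V, ∃ f, FP G f ∧ f a b = 0)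
    (hodd : Odd (Fintype.card V))
    (hex : ∑ v, dS G v univ ≤ 2 * Fintype.card V + 4) : False := by
  obtain ⟨r⟩ := hconn.nonempty
  -- parents
  have hpar : ∀ v, ∃ u, v ≠ r → G.Adj v u ∧ G.dist r u + 1 = G.dist r v := by
    intro v
    by_cases hv : v = r
    · exact ⟨v, fun h => absurd hv h⟩
    · obtain ⟨q, hq⟩ := hconn.exists_walk_length_eq_dist v r
      cases q with
      | nil => exact absurd rfl hv
      | @cons _ u _ h q =>
        refine ⟨u, fun _ => ⟨h, ?_⟩⟩
        have h1 : G.dist u r ≤ q.length := SimpleGraph.dist_le q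
        rw [SimpleGraph.Walk.length_cons] at hq
        have h2 : G.dist v r ≤ G.dist u r + 1 := by
          have := hconn.dist_triangle (u := v) (v := u) (w := r)
          rw [SimpleGraph.dist_eq_one_iff_adj.2 h] at this
          omega
        rw [SimpleGraph.dist_comm (u := r), SimpleGraph.dist_comm (u := r)]
        omega
  choose p hp using hpar
  set dep : V → ℕ := fun v => G.dist r v with hdep
  have hpa : ∀ v, v ≠ r → G.Adj v (p v) := fun v hv => (hp v hv).1
  have hpd : ∀ v, v ≠ r → dep (p v) + 1 = dep v := fun v hv => (hp v hv).2
  set R : V → V → Prop := fun u v => u ≠ r ∧ p u = v with hR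
  set S : V → Finset V := fun w => univ.filter (fun u => Relation.ReflTransGen R u w) with hS
  have memS : ∀ u w, u ∈ S w ↔ Relation.ReflTransGen R u w := by intro u w; simp [hS]
  have S1 : ∀ w, w ∈ S w := fun w => (memS w w).2 Relation.ReflTransGen.refl
  have S2 : ∀ u w, u ∈ S w → u ≠ w → u ≠ r ∧ p u ∈ S w := by
    intro u w hu hne
    rcases Relation.ReflTransGen.cases_head ((memS u w).1 hu) with h | ⟨c, hc, hcw⟩
    · exact absurd h hne
    · refine ⟨hc.1, (memS _ _).2 ?_⟩
      rw [hc.2]; exact hcw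
  have S3 : ∀ u w, u ≠ r → p u ∈ S w → u ∈ S w := by
    intro u w hu h
    exact (memS _ _).2 (Relation.ReflTransGen.head ⟨hu, rfl⟩ ((memS _ _).1 h))
  have S5 : ∀ x v, x ∈ S v → x ≠ v → ∃ w, w ≠ r ∧ p w = v ∧ x ∈ S w := by
    intro x v hx hne
    rcases Relation.ReflTransGen.cases_tail ((memS x v).1 hx) with h | ⟨c, hc, hcw⟩
    · exact absurd h.symm hne
    · exact ⟨c, hcw.1, hcw.2, (memS _ _).2 hc⟩
  have S6 : ∀ u w, u ∈ S w → dep w ≤ dep u := by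
    intro u w hu
    have := (memS u w).1 hu
    induction this with
    | refl => exact le_rfl
    | @tail b c hb hbc ih =>
      have h1 := ih ((memS _ _).2 hb)
      have h2 := hpd b hbc.1
      rw [hbc.2] at h2
      omega
  have Str : ∀ a b c, a ∈ S b → b ∈ S c → a ∈ S c := by
    intro a b c h1 h2
    exact (memS _ _).2 (((memS _ _).1 h1).trans ((memS _ _).1 h2))
  have Sr : ∀ u, u ∈ S r := by
    intro u
    induction h : dep u using Nat.strong_induction_on generalizing u with
    | _ k ih =>
      by_cases hu : u = r
      · rw [hu]; exact S1 r
      · have := hpd u hu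
        exact S3 u r hu (ih (dep (p u)) (by omega) (p u) rfl)
  -- colouring
  set A : Finset V := univ.filter (fun v => Even (dep v)) with hA
  have memA : ∀ v, v ∈ A ↔ Even (dep v) := by intro v; simp [hA]
  set E : Finset (V × V) := univ.filter (fun q => G.Adj q.1 q.2) with hE
  have cardE : E.card ≤ 2 * Fintype.card V + 4 := by
    refine le_trans (le_of_eq ?_) hex
    have h := card_MP (G := G) (univ : Finset V)
    rw [← h]; congr 1
  set mono : Finset V → Finset (V × V) := fun B => E.filter (fun q => (q.1 ∈ B ↔ q.2 ∈ B))
    with hmono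
  have hmono6 : ∀ B, 6 ≤ (mono B).card := by
    intro B
    refine (six_le H hodd hex B).trans ?_
    rw [← Finset.card_union_of_disjoint]
    · apply Finset.card_le_card
      intro q hq
      simp only [Finset.mem_union, mem_MP, Finset.mem_compl] at hq
      simp only [hmono, hE, Finset.mem_filter, Finset.mem_univ, true_and]
      tauto
    · rw [Finset.disjoint_left]
      intro q h1 h2
      rw [mem_MP] at h1 h2
      exact (Finset.mem_compl.1 h2.1) h1.1
  set T1 : Finset (V × V) := (univ.erase r).image (fun v => (v, p v)) with hT1
  set T2 : Finset (V × V) := (univ.erase r).image (fun v => (p v, v)) with hT2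
  have cT1 : T1.card + 1 = Fintype.card V := by
    rw [hT1, Finset.card_image_of_injective _ (fun a b h => by simpa using (Prod.mk.inj h).1),
      Finset.card_erase_of_mem (Finset.mem_univ r), Finset.card_univ]
    have : 0 < Fintype.card V := Fintype.card_pos_iff.2 ⟨r⟩
    omega
  have cT2 : T2.card + 1 = Fintype.card V := by
    rw [hT2, Finset.card_image_of_injective _ (fun a b h => by simpa using (Prod.mk.inj h).2),
      Finset.card_erase_of_mem (Finset.mem_univ r), Finset.card_univ]
    have : 0 < Fintype.card V := Fintype.card_pos_iff.2 ⟨r⟩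
    omega
  have mT1 : ∀ a b, (a, b) ∈ T1 ↔ a ≠ r ∧ p a = b := by
    intro a b; simp only [hT1, Finset.mem_image, Finset.mem_erase, Prod.mk.injEq]
    constructor
    · rintro ⟨c, ⟨h, -⟩, rfl, rfl⟩; exact ⟨h, rfl⟩
    · rintro ⟨h, rfl⟩; exact ⟨a, ⟨h, Finset.mem_univ _⟩, rfl, rfl⟩
  have mT2 : ∀ a b, (a, b) ∈ T2 ↔ b ≠ r ∧ p b = a := by
    intro a b; simp only [hT2, Finset.mem_image, Finset.mem_erase, Prod.mk.injEq]
    constructor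
    · rintro ⟨c, ⟨h, -⟩, rfl, rfl⟩; exact ⟨h, rfl⟩
    · rintro ⟨h, rfl⟩; exact ⟨b, ⟨h, Finset.mem_univ _⟩, rfl, rfl⟩
  have dT : Disjoint T1 T2 := by
    rw [Finset.disjoint_left]
    rintro ⟨a, b⟩ h1 h2
    obtain ⟨h1, h1'⟩ := (mT1 a b).1 h1
    obtain ⟨h2, h2'⟩ := (mT2 a b).1 h2
    have e1 := hpd a h1
    have e2 := hpd b h2
    rw [h1'] at e1; rw [h2'] at e2
    omega
  have colp : ∀ v, v ≠ r → (p v ∈ A ↔ v ∉ A) := by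
    intro v hv
    rw [memA, memA, ← hpd v hv, Nat.even_add_one, not_not]
  have dTM : Disjoint (T1 ∪ T2) (mono A) := by
    rw [Finset.disjoint_left]
    rintro ⟨a, b⟩ h1 h2
    have h2' := (Finset.mem_filter.1 h2).2
    simp only at h2'
    rcases Finset.mem_union.1 h1 with h | h
    · obtain ⟨h3, rfl⟩ := (mT1 a b).1 h
      exact prop_three (colp a h3) h2'
    · obtain ⟨h3, rfl⟩ := (mT2 a b).1 h
      exact prop_three (colp b h3) h2'.symm
  have hsubE : (T1 ∪ T2) ∪ mono A ⊆ E := by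
    rintro ⟨a, b⟩ h
    rcases Finset.mem_union.1 h with h | h
    · rcases Finset.mem_union.1 h with h | h
      · obtain ⟨h3, rfl⟩ := (mT1 a b).1 h
        simpa [hE] using hpa a h3
      · obtain ⟨h3, rfl⟩ := (mT2 a b).1 h
        simpa [hE] using (hpa b h3).symm
    · exact (Finset.mem_filter.1 h).1
  have hcU : ((T1 ∪ T2) ∪ mono A).card = T1.card + T2.card + (mono A).card := by
    rw [Finset.card_union_of_disjoint dTM, Finset.card_union_of_disjoint dT]
  have h6A := hmono6 A
  have hEeq : (T1 ∪ T2) ∪ mono A = E :=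
    Finset.eq_of_subset_of_card_le hsubE (by omega)
  have hMA : (mono A).card = 6 := by
    have := Finset.card_le_card hsubE
    omega
  have trich : ∀ a b, G.Adj a b → (a ≠ r ∧ p a = b) ∨ (b ≠ r ∧ p b = a) ∨ (a ∈ A ↔ b ∈ A) := by
    intro a b hab
    have : (a, b) ∈ (T1 ∪ T2) ∪ mono A := by rw [hEeq]; simpa [hE] using hab
    rcases Finset.mem_union.1 this with h | h
    · rcases Finset.mem_union.1 h with h | h
      · exact Or.inl ((mT1 a b).1 h)
      · exact Or.inr (Or.inl ((mT2 a b).1 h))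
    · exact Or.inr (Or.inr (Finset.mem_filter.1 h).2)
  -- at most one monochromatic edge crosses a branch
  have cross : ∀ w, w ≠ r → ∀ x ∈ S w, ∀ z ∉ S w, ∀ x' ∈ S w, ∀ z' ∉ S w, G.Adj x z → G.Adj x' z' →
      (x ∈ A ↔ z ∈ A) → (x' ∈ A ↔ z' ∈ A) → x = x' ∧ z = z' := by
    intro w hw x hx z hz x' hx' z' hz' hxz hxz' hm hm'
    by_contra hne
    set B : Finset V := univ.filter (fun u => (u ∈ A ↔ u ∈ S w)) with hB
    have memB : ∀ u, u ∈ B ↔ (u ∈ A ↔ u ∈ S w) := by intro u; simp [hB]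
    have hsub : mono B ⊆ ((mono A) \ {(x, z), (z, x), (x', z'), (z', x')}) ∪
        {(w, p w), (p w, w)} := by
      rintro ⟨a, b⟩ hab
      obtain ⟨hab1, hab2⟩ := Finset.mem_filter.1 hab
      have hadj : G.Adj a b := by simpa [hE] using hab1
      simp only [memB] at hab2
      simp only [Finset.mem_union, Finset.mem_sdiff, Finset.mem_insert, Finset.mem_singleton,
        Prod.mk.injEq]
      rcases trich a b hadj with ⟨h, rfl⟩ | ⟨h, rfl⟩ | h
      · right; left
        have c := colp a h
        have s3 := S3 a w h
        by_cases haw : a = w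
        · exact ⟨haw, by rw [haw]⟩
        · have s2 := fun h => (S2 a w h haw).2
          exact absurd hab2 (prop_one c s3 s2)
      · right; right
        have c := colp b h
        have s3 := S3 b w h
        by_cases haw : b = w
        · exact ⟨by rw [haw], haw⟩
        · have s2 := fun h => (S2 b w h haw).2
          exact absurd hab2.symm (prop_one c s3 s2)
      · left
        refine ⟨Finset.mem_filter.2 ⟨hab1, h⟩, ?_⟩
        rintro (⟨rfl, rfl⟩ | ⟨rfl, rfl⟩ | ⟨rfl, rfl⟩ | ⟨rfl, rfl⟩)
        · exact prop_two h hx hz hab2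
        · exact prop_two h.symm hx hz hab2.symm
        · exact prop_two h hx' hz' hab2
        · exact prop_two h.symm hx' hz' hab2.symm
    have h4 : ({(x, z), (z, x), (x', z'), (z', x')} : Finset (V × V)).card = 4 := by
      rw [Finset.card_insert_of_notMem, Finset.card_insert_of_notMem,
        Finset.card_insert_of_notMem, Finset.card_singleton]
      · simp; grind
      · simp; grind
      · simp; grind
    have hsub4 : ({(x, z), (z, x), (x', z'), (z', x')} : Finset (V × V)) ⊆ mono A := by
      intro q hq
      simp only [Finset.mem_insert, Finset.mem_singleton] at hq
      simp only [hmono, hE, Finset.mem_filter, Finset.mem_univ, true_and]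
      rcases hq with rfl | rfl | rfl | rfl
      · exact ⟨hxz, hm⟩
      · exact ⟨hxz.symm, hm.symm⟩
      · exact ⟨hxz', hm'⟩
      · exact ⟨hxz'.symm, hm'.symm⟩
    have c1 := (Finset.card_le_card hsub).trans (Finset.card_union_le _ _)
    rw [Finset.card_sdiff_of_subset hsub4, h4, hMA] at c1
    have c2 := Finset.card_le_two (a := (w, p w)) (b := (p w, w))
    have c3 := hmono6 B
    omega
  -- every branch contains an end of a monochromatic edge
  have hend : ∀ u, ∃ x ∈ S u, ∃ z, G.Adj x z ∧ (x ∈ A ↔ z ∈ A) := by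
    intro u
    obtain ⟨x, hx, hmax⟩ := Finset.exists_max_image (S u) dep ⟨u, S1 u⟩
    obtain ⟨z, hz, hzp⟩ := exists_other H x (p x)
    refine ⟨x, hx, z, hz, ?_⟩
    rcases trich x z hz with ⟨_, h⟩ | ⟨h1, h2⟩ | h
    · exact absurd h.symm hzp
    · have : z ∈ S u := S3 z u h1 (by rw [h2]; exact hx)
      have h3 := hmax z this
      have h4 := hpd z h1
      rw [h2] at h4
      omega
    · exact h
  -- the deepest vertex whose branch contains a monochromatic edge
  obtain ⟨v, hv, hvmax⟩ := Finset.exists_max_image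
    (univ.filter (fun v => ∃ x ∈ S v, ∃ z ∈ S v, G.Adj x z ∧ (x ∈ A ↔ z ∈ A))) dep (by
      obtain ⟨x, hx, z, hz, h⟩ := hend r
      exact ⟨r, by simpa using ⟨x, hx, z, Sr z, hz, h⟩⟩)
  simp only [Finset.mem_filter, Finset.mem_univ, true_and] at hv hvmax
  have hnomono : ∀ w, w ≠ r → p w = v → ∀ x ∈ S w, ∀ z ∈ S w, G.Adj x z → ¬ (x ∈ A ↔ z ∈ A) := by
    intro w hw hwv x hx z hz hxz hm
    have h1 := hvmax w ⟨x, hx, z, hz, hxz, hm⟩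
    have h2 := hpd w hw
    rw [hwv] at h2
    omega
  set y : V → ℝ := fun v => if v ∈ A then 1 else -1 with hy
  have hy1 : ∀ a, y a = 1 ∨ y a = -1 := by
    intro a; by_cases h : a ∈ A <;> simp [hy, h]
  have hyeq : ∀ a b, (a ∈ A ↔ b ∈ A) → y a = y b := by
    intro a b h; simp [hy, h]
  have hyne : ∀ a b, ¬ (a ∈ A ↔ b ∈ A) → y a = - y b := by
    intro a b h
    by_cases h1 : a ∈ A <;> by_cases h2 : b ∈ A
    · exact absurd (iff_of_true h1 h2) h
    · simp [hy, h1, h2]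
    · simp [hy, h1, h2]
    · exact absurd (iff_of_false h1 h2) h
  -- main branch fact
  have main : ∀ w x z, w ≠ r → p w = v → x ∈ S w → G.Adj x z → (x ∈ A ↔ z ∈ A) →
      (∃ f, FP G f ∧ f x z = 1) ∧ ∀ f, FP G f →
        (y x = y v → f w v = f x z) ∧ (y x = - y v → f w v = 1 - f x z) := by
    intro w x z hw hwv hx hxz hm
    have hz : z ∉ S w := fun h => hnomono w hw hwv x hx z h hxz hm
    have hvS : v ∉ S w := by
      intro h
      have h1 := S6 v w h
      have h2 := hpd w hw
      rw [hwv] at h2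
      omega
    have huniq : ∀ a ∈ S w, ∀ b, G.Adj a b → (a ∈ A ↔ b ∈ A) → a = x ∧ b = z := by
      intro a ha b hab hmm
      have hb : b ∉ S w := fun h => hnomono w hw hwv a ha b h hab hmm
      exact cross w hw a ha b hb x hx z hz hab hxz hmm hm
    have hnochild : ∀ q, q ≠ r → p q ≠ x := by
      intro q hq hqx
      obtain ⟨x', hx', z', hxz', hm'⟩ := hend q
      have hqw : q ∈ S w := S3 q w hq (by rw [hqx]; exact hx)
      have h1 := (huniq x' (Str _ _ _ hx' hqw) z' hxz' hm').1
      rw [h1] at hx'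
      have h2 := S6 x q hx'
      have h3 := hpd q hq
      rw [hqx] at h3
      omega
    have hnb : ∀ b, G.Adj x b → b = p x ∨ b = z := by
      intro b hb
      rcases trich x b hb with ⟨_, h⟩ | ⟨h1, h2⟩ | h
      · exact Or.inl h.symm
      · exact absurd h2 (hnochild b h1)
      · exact Or.inr (huniq x hx b hb h).2
    have hf1 : ∃ f, FP G f ∧ f x z = 1 := by
      obtain ⟨f, hf, h0⟩ := H x (p x)
      refine ⟨f, hf, ?_⟩
      rw [← hf.sum x]
      symm
      apply Finset.sum_eq_single z
      · intro b _ hbz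
        by_cases hb : G.Adj x b
        · rcases hnb b hb with rfl | h
          · exact h0
          · exact absurd h hbz
        · exact hf.supp _ _ hb
      · simp
    refine ⟨hf1, fun f hf => ?_⟩
    have hcw := colp w hw
    rw [hwv] at hcw
    refine branch_val H y hy1 (S w) x z w v ?_ ?_ hx hz (S1 w) hvS ?_ ?_ hf1 hf
    · intro a ha b hb hab
      exact hyne a b (hnomono w hw hwv a ha b hb hab)
    · intro a ha b hb hab
      rcases trich a b hab with ⟨h1, h2⟩ | ⟨h1, h2⟩ | h
      · right
        by_cases haw : a = w
        · exact ⟨haw, by rw [← h2, haw, hwv]⟩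
        · exact absurd (h2 ▸ (S2 a w ha haw).2) hb
      · exact absurd (S3 b w h1 (by rw [h2]; exact ha)) hb
      · exact Or.inl (huniq a ha b hab h)
    · intro h
      obtain ⟨h1, h2⟩ := Prod.mk.inj h
      rw [h1, h2] at hm
      exact prop_three hcw hm
    · exact hyne _ _ (prop_three hcw)
  -- finish
  have fin : ∀ x ∈ S v, ∀ z ∈ S v, x ≠ v → G.Adj x z → (x ∈ A ↔ z ∈ A) → False := by
    intro x hx z hz hxv hxz hm
    obtain ⟨w, hw, hwv, hxw⟩ := S5 x v hx hxv
    obtain ⟨⟨f1, hf1, h11⟩, hall⟩ := main w x z hw hwv hxw hxz hm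
    by_cases hzv : z = v
    · subst hzv
      have h1 := (hall f1 hf1).1 (hyeq _ _ hm)
      have hcw := colp w hw
      rw [hwv] at hcw
      have hne : x ≠ w := by rintro rfl; exact prop_three hcw hm
      have h2 := hf1.two_le_one z x w hne
      rw [hf1.symm z x, hf1.symm z w, h1, h11] at h2
      norm_num at h2
    · obtain ⟨w2, hw2, hwv2, hzw2⟩ := S5 z v hz hzv
      obtain ⟨-, hall2⟩ := main w2 z x hw2 hwv2 hzw2 hxz.symm hm.symm
      have hww : w ≠ w2 := by
        rintro rfl
        exact hnomono w hw hwv x hxw z hzw2 hxz hm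
      have hyy := hyeq _ _ hm
      by_cases hc : x ∈ A ↔ v ∈ A
      · have e := hyeq _ _ hc
        have h1 := (hall f1 hf1).1 e
        have h2 := (hall2 f1 hf1).1 (hyy ▸ e)
        have h3 := hf1.two_le_one v w w2 hww
        rw [hf1.symm v w, hf1.symm v w2, h1, h2, hf1.symm z x, h11] at h3
        norm_num at h3
      · have e := hyne _ _ hc
        obtain ⟨f0, hf0, h00⟩ := H x z
        have h1 := (hall f0 hf0).2 e
        have h2 := (hall2 f0 hf0).2 (hyy ▸ e)
        have h3 := hf0.two_le_one v w w2 hww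
        rw [hf0.symm v w, hf0.symm v w2, h1, h2, hf0.symm z x, h00] at h3
        norm_num at h3
  obtain ⟨x, hx, z, hz, hxz, hm⟩ := hv
  by_cases hxv : x = v
  · exact fin z hz x hx (fun h => hxz.ne (hxv.trans h.symm)) hxz.symm hm.symm
  · exact fin x hx z hz hxv hxz hm

end core

section lower
open Classical

set_option linter.unusedSectionVars false

variable [Fintype V] {G : SimpleGraph V}

theorem lower (H : ∀ a b : V, ∃ f, FP G f ∧ f a b = 0) (hodd : Odd (Fintype.card V))
    (hex : ∑ v, dS G v univ ≤ 2 * Fintype.card V + 4) : False := by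
  have hodd' : Odd G.oddComponents.ncard := by
    rw [SimpleGraph.odd_ncard_oddComponents, Nat.card_eq_fintype_card]; exact hodd
  obtain ⟨c, hc⟩ : G.oddComponents.Nonempty := by
    rw [Set.nonempty_iff_ne_empty]
    intro h
    rw [h] at hodd'
    simp at hodd'
  have hc' : Odd c.supp.ncard := hc
  have hout : ∀ u ∈ c.supp, ∀ v, G.Adj u v → v ∈ c.supp := by
    intro u hu v huv
    exact (c.mem_supp_congr_adj huv).1 hu
  have hdeg : ∀ v, 2 ≤ dS G v univ := by
    intro v
    obtain ⟨u, hu, -⟩ := exists_other H v v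
    obtain ⟨u', hu', hne⟩ := exists_other H v u
    unfold dS
    rw [← Finset.card_pair hne]
    apply Finset.card_le_card
    intro z hz
    simp only [Finset.mem_insert, Finset.mem_singleton] at hz
    simp only [Finset.mem_filter, Finset.mem_univ, true_and]
    rcases hz with rfl | rfl <;> assumption
  have hconn : (G.induce c.supp).Connected := c.connected_toSimpleGraph
  refine core (V := c.supp) (G := G.induce c.supp) hconn ?_ ?_ ?_
  · intro a b
    obtain ⟨f, hf, h0⟩ := H a b
    refine ⟨fun u v => f u v, ⟨fun u v => hf.symm _ _, fun u v => hf.nonneg _ _,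
      fun u v h => hf.supp _ _ (by simpa using h), ?_⟩, h0⟩
    intro u
    rw [← hf.sum u]
    have h1 : ∑ v : c.supp, f u v = ∑ v ∈ c.supp.toFinset, f u v :=
      (Finset.sum_subtype c.supp.toFinset (by simp) (fun v => f u v)).symm
    rw [h1]
    apply Finset.sum_subset (Finset.subset_univ _)
    intro v _ hv
    apply hf.supp
    intro huv
    exact hv (by simpa using hout u u.2 v huv)
  · rw [← Nat.card_eq_fintype_card]
    exact hc'
  · have hd : ∀ v : c.supp, dS (G.induce c.supp) v univ = dS G v univ := by
      intro v
      unfold dS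
      refine Finset.card_bij (fun a _ => a.1) ?_ ?_ ?_
      · intro a ha; simpa using ha
      · intro a _ b _ h; exact Subtype.ext h
      · intro b hb
        have hb' : G.Adj v b := by simpa using hb
        exact ⟨⟨b, hout v v.2 b hb'⟩, by simpa using hb', rfl⟩
    simp only [hd]
    have h1 : ∑ v : c.supp, dS G v univ = ∑ v ∈ c.supp.toFinset, dS G v univ :=
      (Finset.sum_subtype c.supp.toFinset (by simp) (fun v => dS G v univ)).symm
    have h2 := Finset.sum_add_sum_compl c.supp.toFinset (fun v => dS G v univ)
    have h3 : 2 * (c.supp.toFinset)ᶜ.card ≤ ∑ v ∈ (c.supp.toFinset)ᶜ, dS G v univ := by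
      have := Finset.card_nsmul_le_sum (c.supp.toFinset)ᶜ (fun v => dS G v univ) 2
        (fun v _ => hdeg v)
      simpa [mul_comm] using this
    have h4 := Finset.card_add_card_compl c.supp.toFinset
    have h5 : Fintype.card c.supp = c.supp.toFinset.card := (Set.toFinset_card _).symm
    rw [h1, h5]
    omega

lemma sum_dS : ∑ v, dS G v univ = 2 * G.edgeSet.ncard := by
  have h := G.sum_degrees_eq_twice_card_edges
  rw [← SimpleGraph.coe_edgeFinset, Set.ncard_coe_finset, ← h]
  refine Finset.sum_congr rfl fun v _ => ?_
  unfold dS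
  rw [← SimpleGraph.card_neighborFinset_eq_degree]
  congr 1
  ext u; simp

end lower

section conv

variable [Fintype V] [DecidableEq V] {G : SimpleGraph V}

lemma sum_inc (f : Sym2 V → ℝ) (v : V) :
    ∑ e ∈ Finset.univ.filter (fun e : Sym2 V => v ∈ e), f e = ∑ u, f s(v, u) := by
  symm
  refine Finset.sum_bij (fun u _ => s(v, u)) ?_ ?_ ?_ ?_
  · intro a _; simp
  · intro a _ b _ h; exact Sym2.congr_right.1 h
  · intro e he
    obtain ⟨u, rfl⟩ := Sym2.mem_iff_exists.1 (Finset.mem_filter.1 he).2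
    exact ⟨u, Finset.mem_univ _, rfl⟩
  · intro a _; rfl

lemma HasFPM_iff : G.HasFPM ↔ ∃ f, FP G f := by
  constructor
  · rintro ⟨f, h1, h2, h3⟩
    refine ⟨fun u v => f s(u, v), ⟨fun u v => by rw [Sym2.eq_swap], fun u v => (h1 _).1,
      fun u v h => h2 _ (by simpa using h), fun u => ?_⟩⟩
    rw [← h3 u, sum_inc]
  · rintro ⟨f, hf⟩
    refine ⟨Sym2.lift ⟨f, hf.symm⟩, ?_, ?_, ?_⟩
    · intro e
      induction e using Sym2.ind with
      | _ a b => exact ⟨hf.nonneg a b, hf.le_one a b⟩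
    · intro e
      induction e using Sym2.ind with
      | _ a b => intro h; exact hf.supp a b (by simpa using h)
    · intro v
      rw [sum_inc]
      simpa using hf.sum v

lemma FP_delete {F : Finset (Sym2 V)} {f : V → V → ℝ} :
    FP (G.deleteEdges ↑F) f ↔ FP G f ∧ ∀ a b, s(a, b) ∈ F → f a b = 0 := by
  constructor
  · intro h
    refine ⟨⟨h.symm, h.nonneg, fun u v huv => h.supp u v ?_, h.sum⟩, fun a b hab => h.supp a b ?_⟩
    · rw [SimpleGraph.deleteEdges_adj]; tauto
    · rw [SimpleGraph.deleteEdges_adj]; simp [hab]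
  · rintro ⟨h, h0⟩
    refine ⟨h.symm, h.nonneg, fun u v huv => ?_, h.sum⟩
    rw [SimpleGraph.deleteEdges_adj] at huv
    by_cases hF : s(u, v) ∈ F
    · exact h0 u v hF
    · apply h.supp
      intro h'; exact huv ⟨h', by simpa using hF⟩

lemma H_of_fmp (h : G.fmp = 2) : ∀ a b : V, ∃ f, FP G f ∧ f a b = 0 := by
  have key : ∀ F : Finset (Sym2 V), ↑F ⊆ G.edgeSet → F.card < 2 → ∃ f, FP (G.deleteEdges ↑F) f := by
    intro F hF hc
    by_contra hno
    rw [← HasFPM_iff] at hno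
    have := Nat.sInf_le (s := {k | ∃ F : Finset (Sym2 V), ↑F ⊆ G.edgeSet ∧ F.card = k ∧
      ¬ (G.deleteEdges ↑F).HasFPM}) ⟨F, hF, rfl, hno⟩
    change G.fmp ≤ _ at this
    omega
  intro a b
  by_cases hab : G.Adj a b
  · obtain ⟨f, hf⟩ := key {s(a, b)} (by simpa using hab) (by simp)
    rw [FP_delete] at hf
    exact ⟨f, hf.1, hf.2 a b (by simp)⟩
  · obtain ⟨f, hf⟩ := key ∅ (by simp) (by simp)
    rw [FP_delete] at hf
    exact ⟨f, hf.1, hf.1.supp _ _ hab⟩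

lemma fmp_eq_two (H : ∀ a b : V, ∃ f, FP G f ∧ f a b = 0) (v a b : V) (hab : a ≠ b)
    (hva : G.Adj v a) (hvb : G.Adj v b) (hv : ∀ u, G.Adj v u → u = a ∨ u = b) : G.fmp = 2 := by
  have hmem : 2 ∈ {k | ∃ F : Finset (Sym2 V), ↑F ⊆ G.edgeSet ∧ F.card = k ∧
      ¬ (G.deleteEdges ↑F).HasFPM} := by
    refine ⟨{s(v, a), s(v, b)}, ?_, ?_, ?_⟩
    · intro e he
      simp only [Finset.coe_insert, Finset.coe_singleton, Set.mem_insert_iff,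
        Set.mem_singleton_iff] at he
      rcases he with rfl | rfl <;> simpa
    · apply Finset.card_pair
      intro h; exact hab (Sym2.congr_right.1 h)
    · rw [HasFPM_iff]
      rintro ⟨f, hf⟩
      rw [FP_delete] at hf
      obtain ⟨u, hu, hne⟩ := hf.1.exists_pos v
      apply hne
      apply hf.2
      rcases hv u hu with rfl | rfl <;> simp
  apply le_antisymm (Nat.sInf_le hmem)
  obtain ⟨F, hF, hc, hno⟩ := Nat.sInf_mem ⟨2, hmem⟩
  change F.card = G.fmp at hc
  by_contra hlt
  apply hno
  rw [HasFPM_iff]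
  have hlt' : ¬ 2 ≤ G.fmp := hlt
  have h1 : F.card ≤ 1 := by omega
  rcases Nat.le_one_iff_eq_zero_or_eq_one.1 h1 with h | h
  · rw [Finset.card_eq_zero] at h
    obtain ⟨f, hf, -⟩ := H v v
    exact ⟨f, FP_delete.2 ⟨hf, by simp [h]⟩⟩
  · obtain ⟨e, rfl⟩ := Finset.card_eq_one.1 h
    induction e using Sym2.ind with
    | _ x y =>
      obtain ⟨f, hf, h0⟩ := H x y
      refine ⟨f, FP_delete.2 ⟨hf, fun c d hcd => ?_⟩⟩
      rw [Finset.mem_singleton, Sym2.eq_iff] at hcd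
      rcases hcd with ⟨rfl, rfl⟩ | ⟨rfl, rfl⟩
      · exact h0
      · rw [hf.symm]; exact h0

/-- A permutation moving along edges gives a fractional perfect matching. -/
lemma FP_of_perm (π : V → V) (hinj : Function.Injective π) (hadj : ∀ v, G.Adj v (π v)) :
    FP G (fun u v => ((if π u = v then 1 else 0) + (if π v = u then 1 else 0)) / 2) := by
  have hbij : Function.Bijective π := Finite.injective_iff_bijective.1 hinj
  refine ⟨fun u v => by ring, fun u v => ?_, fun u v h => ?_, fun u => ?_⟩
  · split_ifs <;> norm_num
  · rw [if_neg, if_neg]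
    · norm_num
    · intro h'; exact h (by have := (hadj v).symm; rwa [h'] at this)
    · intro h'; exact h (by have := (hadj u); rwa [h'] at this)
  · rw [← Finset.sum_div, Finset.sum_add_distrib]
    obtain ⟨w, hw⟩ := hbij.2 u
    have : ∀ v, (π v = u) ↔ (w = v) := by
      intro v; rw [← hw]; exact ⟨fun h => (hinj h).symm, fun h => by rw [h]⟩
    simp [this]

end conv

section upper

/-- successor map: rim `0 → 1 → 2 → 3 → 0`, hub `4 → 0`, even cycle `5 → 6 → ⋯ → n - 1 → 5`. -/
def sig (n a : ℕ) : ℕ :=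
  if a = 3 then 0 else if a = 4 then 0 else if a = n - 1 then 5 else a + 1

/-- disjoint union of the wheel on `0, …, 4` and an even cycle on `5, …, n - 1`. -/
def WG (n : ℕ) (hn : 9 ≤ n) : SimpleGraph (Fin n) where
  Adj u v := sig n u = v ∨ sig n v = u ∨ (u.1 = 4 ∧ 1 ≤ v.1 ∧ v.1 ≤ 3) ∨
    (v.1 = 4 ∧ 1 ≤ u.1 ∧ u.1 ≤ 3)
  symm := ⟨fun u v h => by tauto⟩
  loopless := ⟨fun u h => by
    have := u.2
    unfold sig at h
    split_ifs at h <;> omega⟩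

/-- the three half-integral matchings, as permutations -/
def p1 (a : ℕ) : ℕ :=
  if a = 4 then 0 else if a = 0 then 1 else if a = 1 then 4 else if a = 2 then 3 else
  if a = 3 then 2 else if a % 2 = 1 then a + 1 else a - 1

def p2 (n a : ℕ) : ℕ :=
  if a = 4 then 2 else if a = 2 then 3 else if a = 3 then 4 else if a = 0 then 1 else
  if a = 1 then 0 else if a = 5 then n - 1 else if a = n - 1 then 5 else
  if a % 2 = 0 then a + 1 else a - 1

def p3 (a : ℕ) : ℕ :=
  if a = 4 then 1 else if a = 1 then 2 else if a = 2 then 4 else if a = 0 then 3 else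
  if a = 3 then 0 else if a % 2 = 1 then a + 1 else a - 1

/-- adjacency of the construction on the level of natural numbers -/
def WRel (n a b : ℕ) : Prop := sig n a = b ∨ sig n b = a ∨ (a = 4 ∧ 1 ≤ b ∧ b ≤ 3) ∨
        (b = 4 ∧ 1 ≤ a ∧ a ≤ 3)

lemma sig_big {n a : ℕ} (h : 5 ≤ a) : sig n a = if a = n - 1 then 5 else a + 1 := by
  unfold sig; rw [if_neg (by omega), if_neg (by omega)]

lemma p1_big {a : ℕ} (h : 5 ≤ a) : p1 a = if a % 2 = 1 then a + 1 else a - 1 := by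
  unfold p1
  rw [if_neg (by omega), if_neg (by omega), if_neg (by omega), if_neg (by omega),
    if_neg (by omega)]

lemma p3_big {a : ℕ} (h : 5 ≤ a) : p3 a = if a % 2 = 1 then a + 1 else a - 1 := by
  unfold p3
  rw [if_neg (by omega), if_neg (by omega), if_neg (by omega), if_neg (by omega),
    if_neg (by omega)]

lemma p2_big {n a : ℕ} (h : 5 ≤ a) : p2 n a = if a = 5 then n - 1 else if a = n - 1 then 5 else
    if a % 2 = 0 then a + 1 else a - 1 := by
  unfold p2
  rw [if_neg (by omega), if_neg (by omega), if_neg (by omega), if_neg (by omega),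
    if_neg (by omega)]

lemma WRel_p1_big (n k a : ℕ) (hk : n = 2 * k + 1) (ha : a < n) (h : 5 ≤ a) :
    WRel n a (if a % 2 = 1 then a + 1 else a - 1) := by
  unfold WRel
  by_cases hp : a % 2 = 1
  · left
    rw [if_pos hp, sig_big h, if_neg (by omega)]
  · right; left
    rw [if_neg hp, sig_big (by omega), if_neg (by omega)]; omega

lemma WRel_p1 (n k a : ℕ) (hn : 9 ≤ n) (hk : n = 2 * k + 1) (ha : a < n) : WRel n a (p1 a) := by
  have hx : a = 0 ∨ a = 1 ∨ a = 2 ∨ a = 3 ∨ a = 4 ∨ 5 ≤ a := by omega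
  rcases hx with rfl | rfl | rfl | rfl | rfl | hx
  iterate 5 (simp [WRel, p1, sig]; try omega)
  rw [p1_big hx]
  exact WRel_p1_big n k a hk ha hx

lemma WRel_p3 (n k a : ℕ) (hn : 9 ≤ n) (hk : n = 2 * k + 1) (ha : a < n) : WRel n a (p3 a) := by
  have hx : a = 0 ∨ a = 1 ∨ a = 2 ∨ a = 3 ∨ a = 4 ∨ 5 ≤ a := by omega
  rcases hx with rfl | rfl | rfl | rfl | rfl | hx
  iterate 5 (simp [WRel, p3, sig]; try omega)
  rw [p3_big hx]
  exact WRel_p1_big n k a hk ha hx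

lemma WRel_p2 (n k a : ℕ) (hn : 9 ≤ n) (hk : n = 2 * k + 1) (ha : a < n) :
    WRel n a (p2 n a) := by
  have hx : a = 0 ∨ a = 1 ∨ a = 2 ∨ a = 3 ∨ a = 4 ∨ 5 ≤ a := by omega
  rcases hx with rfl | rfl | rfl | rfl | rfl | hx
  iterate 5 (simp [WRel, p2, sig]; try omega)
  rw [p2_big hx]
  unfold WRel
  by_cases h5 : a = 5
  · right; left
    rw [if_pos h5, sig_big (by omega), if_pos rfl, h5]
  · rw [if_neg h5]
    by_cases hl : a = n - 1
    · left
      rw [if_pos hl, sig_big hx, if_pos hl]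
    · rw [if_neg hl]
      by_cases hp : a % 2 = 0
      · left
        rw [if_pos hp, sig_big hx, if_neg hl]
      · right; left
        rw [if_neg hp, sig_big (by omega), if_neg (by omega)]; omega

lemma avoid_aux (n k x : ℕ) (hn : 9 ≤ n) (hk : n = 2 * k + 1) (hxn : x < n)
    (h2 : p2 n x = p1 x ∨ p2 n (p1 x) = x) (h3 : p3 x = p1 x ∨ p3 (p1 x) = x) : False := by
  have hx : x = 0 ∨ x = 1 ∨ x = 2 ∨ x = 3 ∨ x = 4 ∨ 5 ≤ x := by omega
  rcases hx with rfl | rfl | rfl | rfl | rfl | hx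
  · simp [p1, p3] at h3
  · simp [p1, p2] at h2
  · simp [p1, p3] at h3
  · simp [p1, p3] at h3
  · simp [p1, p2] at h2
  · clear h3
    rw [p1_big hx] at h2
    by_cases hp : x % 2 = 1
    · rw [if_pos hp, p2_big hx, p2_big (by omega)] at h2
      rcases h2 with h2 | h2 <;> split_ifs at h2 <;> omega
    · rw [if_neg hp, p2_big hx, p2_big (by omega)] at h2
      rcases h2 with h2 | h2 <;> split_ifs at h2 <;> omega

lemma avoid (n k x z : ℕ) (hn : 9 ≤ n) (hk : n = 2 * k + 1) (ha : x < n) (hb : z < n)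
    (i1 : p1 x = z ∨ p1 z = x) (i2 : p2 n x = z ∨ p2 n z = x) (i3 : p3 x = z ∨ p3 z = x) :
    False := by
  rcases i1 with rfl | rfl
  · exact avoid_aux n k x hn hk ha i2 i3
  · exact avoid_aux n k z hn hk hb i2.symm i3.symm

set_option maxHeartbeats 4000000 in
lemma WG_H (n : ℕ) (hn : 9 ≤ n) (hodd : Odd n) :
    ∀ a b : Fin n, ∃ f, FP (WG n hn) f ∧ f a b = 0 := by
  obtain ⟨k, hk⟩ := hodd
  have gen : ∀ π : ℕ → ℕ, (∀ a, a < n → π a < n) →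
      (∀ a b, a < n → b < n → π a = π b → a = b) →
      (∀ a, a < n → sig n a = π a ∨ sig n (π a) = a ∨ (a = 4 ∧ 1 ≤ π a ∧ π a ≤ 3) ∨
        (π a = 4 ∧ 1 ≤ a ∧ a ≤ 3)) →
      ∀ a b : Fin n, π a ≠ b → π b ≠ a → ∃ f, FP (WG n hn) f ∧ f a b = 0 := by
    intro π h1 h2 h3 a b hab hba
    refine ⟨_, FP_of_perm (fun v : Fin n => (⟨π v, h1 v v.2⟩ : Fin n)) ?_ ?_, ?_⟩
    · intro u v huv
      exact Fin.ext (h2 u v u.2 v.2 (by simpa using huv))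
    · intro v
      exact h3 v v.2
    · rw [if_neg, if_neg]
      · norm_num
      · intro h; exact hba (by simpa using congrArg Fin.val h)
      · intro h; exact hab (by simpa using congrArg Fin.val h)
  have g1 := gen p1 (by intro a ha; unfold p1; split_ifs <;> omega)
    (by intro a b ha hb h; unfold p1 at h; split_ifs at h <;> omega)
    (fun a ha => WRel_p1 n k a hn hk ha)
  have g2 := gen (p2 n) (by intro a ha; unfold p2; split_ifs <;> omega)
    (by intro a b ha hb h; unfold p2 at h; split_ifs at h <;> omega)
    (fun a ha => WRel_p2 n k a hn hk ha)
  have g3 := gen p3 (by intro a ha; unfold p3; split_ifs <;> omega)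
    (by intro a b ha hb h; unfold p3 at h; split_ifs at h <;> omega)
    (fun a ha => WRel_p3 n k a hn hk ha)
  intro a b
  by_contra hno
  have i1 : p1 a = b ∨ p1 b = a := by
    by_contra h; push Not at h; exact hno (g1 a b h.1 h.2)
  have i2 : p2 n a = b ∨ p2 n b = a := by
    by_contra h; push Not at h; exact hno (g2 a b h.1 h.2)
  have i3 : p3 a = b ∨ p3 b = a := by
    by_contra h; push Not at h; exact hno (g3 a b h.1 h.2)
  exact avoid n k a b hn hk a.2 b.2 i1 i2 i3

lemma WG_card (n : ℕ) (hn : 9 ≤ n) : (WG n hn).edgeSet.ncard ≤ n + 3 := by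
  have h4 : 4 < n := by omega
  have h1 : 1 < n := by omega
  have h2 : 2 < n := by omega
  have h3 : 3 < n := by omega
  have hs : ∀ a : Fin n, sig n a < n := by
    intro a; have := a.2; unfold sig; split_ifs <;> omega
  have hsub : (WG n hn).edgeSet ⊆
      ↑((Finset.univ.image (fun v : Fin n => s(v, (⟨sig n v, hs v⟩ : Fin n)))) ∪
        {s((⟨4, h4⟩ : Fin n), ⟨1, h1⟩), s((⟨4, h4⟩ : Fin n), ⟨2, h2⟩),
          s((⟨4, h4⟩ : Fin n), ⟨3, h3⟩)}) := by
    intro e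
    induction e using Sym2.ind with
    | _ a b =>
      intro h
      have h' : (WG n hn).Adj a b := h
      have three : ∀ c d : Fin n, c.1 = 4 → 1 ≤ d.1 → d.1 ≤ 3 → s(c, d) ∈
          ({s((⟨4, h4⟩ : Fin n), ⟨1, h1⟩), s((⟨4, h4⟩ : Fin n), ⟨2, h2⟩),
          s((⟨4, h4⟩ : Fin n), ⟨3, h3⟩)} : Finset (Sym2 (Fin n))) := by
        intro c d hc hd1 hd3
        have hc' : c = ⟨4, h4⟩ := Fin.ext hc
        have hd : d = ⟨1, h1⟩ ∨ d = ⟨2, h2⟩ ∨ d = ⟨3, h3⟩ := by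
          simp only [Fin.ext_iff]; omega
        subst hc'
        rcases hd with rfl | rfl | rfl <;> simp
      rw [Finset.mem_coe, Finset.mem_union]
      rcases h' with h | h | h | h
      · left
        exact Finset.mem_image.2 ⟨a, Finset.mem_univ _, by congr 2⟩
      · left
        exact Finset.mem_image.2 ⟨b, Finset.mem_univ _, by
          rw [show s(a, b) = s(b, a) from Sym2.eq_swap]; congr 2⟩
      · right; exact three a b h.1 h.2.1 h.2.2
      · right; rw [show s(a, b) = s(b, a) from Sym2.eq_swap]; exact three b a h.1 h.2.1 h.2.2
  refine (Set.ncard_le_ncard hsub (Finset.finite_toSet _)).trans ?_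
  rw [Set.ncard_coe_finset]
  refine (Finset.card_union_le _ _).trans ?_
  refine Nat.add_le_add (Finset.card_image_le.trans (by simp)) Finset.card_le_three

lemma WG_fmp (n : ℕ) (hn : 9 ≤ n) (hodd : Odd n) : (WG n hn).fmp = 2 := by
  refine fmp_eq_two (WG_H n hn hodd) ⟨5, by omega⟩ ⟨6, by omega⟩ ⟨n - 1, by omega⟩ ?_ ?_ ?_ ?_
  · intro h
    have := congrArg Fin.val h
    simp at this; omega
  · left
    show sig n 5 = 6
    unfold sig; split_ifs <;> omega
  · right; left
    show sig n (n - 1) = 5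
    unfold sig; split_ifs <;> omega
  · intro u hu
    have h2 := u.2
    simp only [Fin.ext_iff]
    have h : sig n 5 = u ∨ sig n u = 5 ∨ ((5 : ℕ) = 4 ∧ 1 ≤ u.1 ∧ u.1 ≤ 3) ∨
      (u.1 = 4 ∧ 1 ≤ 5 ∧ 5 ≤ 3) := hu
    have h5 : sig n 5 = 6 := by unfold sig; split_ifs <;> omega
    rw [h5] at h
    rcases h with h | h | h | h
    · omega
    · unfold sig at h
      split_ifs at h <;> omega
    · omega
    · omega

end upper

lemma lower_fin (n : ℕ) (hodd : Odd n) (G : SimpleGraph (Fin n)) (h : G.fmp = 2) :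
    n + 3 ≤ G.edgeSet.ncard := by
  by_contra hlt
  refine lower (H_of_fmp h) (by simpa using hodd) ?_
  rw [sum_dS, Fintype.card_fin]
  omega

end FMPaux

theorem s_n_two (n : ℕ) (hn : 9 ≤ n) (hodd : Odd n) :
    IsLeast {m : ℕ | ∃ G : SimpleGraph (Fin n), G.fmp = 2 ∧ G.edgeSet.ncard = m}
      (n + 3) := by
  constructor
  · have hf := FMPaux.WG_fmp n hn hodd
    exact ⟨FMPaux.WG n hn, hf,
      le_antisymm (FMPaux.WG_card n hn) (FMPaux.lower_fin n hodd _ hf)⟩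
  · rintro m ⟨G, hG, rfl⟩
    exact FMPaux.lower_fin n hodd G hG
end
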